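/- arXiv:2105.01449 — 2 statements merged into one kernel-verified Lean document; each statement's English description precedes it below -/
import Mathlib

section
/- (Markov's theorem) L ∩ [√5, 3) = M ∩ [√5, 3) = {√(9 − 4/z²) : z a Markov number}. -/
open scoped ENNReal

/-- The distance from a real number to the nearest integer. -/
noncomputable def distNearestInt (x : ℝ) : ℝ := |x - round x|

/-- The best constant of Diophantine approximation of `α`,
`ℓ(α) = limsup_{q → ∞} 1 / (q ⬝ ‖q α‖) ∈ [0, ∞]`. -/
noncomputable def lagrangeVal (α : ℝ) : ℝ≥0∞ :=
  Filter.limsup (fun q : ℕ => ENNReal.ofReal (1 / (q * distNearestInt (q * α)))) Filter.atTop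

/-- The Lagrange spectrum: the set of finite values `ℓ(α)` over irrational `α`. -/
def LagrangeSpectrum : Set ℝ :=
  {t | ∃ α : ℝ, Irrational α ∧ lagrangeVal α ≠ ⊤ ∧ (lagrangeVal α).toReal = t}

/-- The best constant of Diophantine approximation of the binary quadratic form
`h(x,y) = a x² + b x y + c y²`, namely `m(h) = sup_{(p,q) ≠ (0,0)} √Δ(h) / |h(p,q)| ∈ (0, ∞]`. -/
noncomputable def markovVal (a b c : ℝ) : ℝ≥0∞ :=
  ⨆ (pq : ℤ × ℤ) (_ : pq ≠ (0, 0)),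
    ENNReal.ofReal (Real.sqrt (b ^ 2 - 4 * a * c)) /
      ENNReal.ofReal |a * (pq.1 : ℝ) ^ 2 + b * pq.1 * pq.2 + c * (pq.2 : ℝ) ^ 2|

/-- The Markov spectrum: the set of finite values `m(h)` over real indefinite binary
quadratic forms `h` with positive discriminant. -/
def MarkovSpectrum : Set ℝ :=
  {t | ∃ a b c : ℝ, 0 < b ^ 2 - 4 * a * c ∧ markovVal a b c ≠ ⊤ ∧ (markovVal a b c).toReal = t}

/-- A Markov triple: a triple of positive integers with `x² + y² + z² = 3xyz`. -/
def IsMarkovTriple (x y z : ℕ) : Prop :=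
  0 < x ∧ 0 < y ∧ 0 < z ∧ x ^ 2 + y ^ 2 + z ^ 2 = 3 * x * y * z

/-- A Markov number: the largest coordinate of some Markov triple. -/
def IsMarkovNumber (z : ℕ) : Prop :=
  ∃ x y : ℕ, IsMarkovTriple x y z ∧ x ≤ z ∧ y ≤ z

/-- Three consecutive fractions `p₁/x < p₃/m < p₂/y` whose denominators form a Markov triple,
with `m` the largest; `z` is the determinant of the outer pair, so that `z + m = 3xy`. -/
structure MarkovFan (p₁ x p₂ y p₃ m z : ℤ) : Prop where
  x_pos : 0 < x
  y_pos : 0 < y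
  z_pos : 0 < z
  x_le : x ≤ m
  y_le : y ≤ m
  det_outer : p₂ * x - p₁ * y = z
  det_left : p₃ * x - p₁ * m = y
  det_right : p₂ * m - p₃ * y = x
  vieta : z + m = 3 * x * y
  coprime_xy : IsCoprime x y
  coprime_xm : IsCoprime x m
  coprime_ym : IsCoprime y m

namespace MarkovFan

variable {p₁ x p₂ y p₃ m z : ℤ}

theorem m_pos (h : MarkovFan p₁ x p₂ y p₃ m z) : 0 < m := h.x_pos.trans_le h.x_le

theorem z_mul_m (h : MarkovFan p₁ x p₂ y p₃ m z) : z * m = x ^ 2 + y ^ 2 := by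
  linear_combination (-m) * h.det_outer + x * h.det_right + y * h.det_left

theorem markov_eq (h : MarkovFan p₁ x p₂ y p₃ m z) :
    x ^ 2 + y ^ 2 + m ^ 2 = 3 * x * y * m := by
  linear_combination m * h.vieta - h.z_mul_m

theorem markov_eq' (h : MarkovFan p₁ x p₂ y p₃ m z) :
    x ^ 2 + y ^ 2 + z ^ 2 = 3 * x * y * z := by
  linear_combination z * h.vieta - h.z_mul_m

theorem root : MarkovFan (-1) 1 1 1 0 1 2 := by
  constructor <;> norm_num

theorem mirror (h : MarkovFan p₁ x p₂ y p₃ m z) : MarkovFan (-p₂) y (-p₁) x (-p₃) m z where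
  x_pos := h.y_pos
  y_pos := h.x_pos
  z_pos := h.z_pos
  x_le := h.y_le
  y_le := h.x_le
  det_outer := by linear_combination h.det_outer
  det_left := by linear_combination h.det_right
  det_right := by linear_combination h.det_left
  vieta := by linear_combination h.vieta
  coprime_xy := h.coprime_xy.symm
  coprime_xm := h.coprime_ym
  coprime_ym := h.coprime_xm

theorem y_le_mul (h : MarkovFan p₁ x p₂ y p₃ m z) : y ≤ x * m := by
  nlinarith [h.x_pos, h.y_le, h.m_pos]

theorem left (h : MarkovFan p₁ x p₂ y p₃ m z) :
    MarkovFan p₁ x p₃ m (3 * x * p₃ - p₂) (3 * x * m - y) y where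
  x_pos := h.x_pos
  y_pos := h.m_pos
  z_pos := h.y_pos
  x_le := by nlinarith [h.x_pos, h.y_le_mul, h.m_pos]
  y_le := by nlinarith [h.x_pos, h.y_le_mul, h.m_pos]
  det_outer := h.det_left
  det_left := by linear_combination 3 * x * h.det_left - h.det_outer - h.vieta
  det_right := by linear_combination h.det_right
  vieta := by ring
  coprime_xy := h.coprime_xm
  coprime_xm := by
    rw [show 3 * x * m - y = -y + x * (3 * m) by ring]
    exact IsCoprime.add_mul_left_right h.coprime_xy.neg_right _
  coprime_ym := by
    rw [show 3 * x * m - y = -y + m * (3 * x) by ring]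
    exact IsCoprime.add_mul_left_right h.coprime_ym.symm.neg_right _

theorem right (h : MarkovFan p₁ x p₂ y p₃ m z) :
    MarkovFan p₃ m p₂ y (3 * y * p₃ - p₁) (3 * y * m - x) x := by
  have := h.mirror.left.mirror
  simpa only [neg_neg, neg_sub, mul_neg, sub_neg_eq_add, neg_add_eq_sub, neg_add_rev] using this

theorem dvd_left (h : MarkovFan p₁ x p₂ y p₃ m z) : x ∣ p₁ ^ 2 + 1 := by
  have : x ∣ y ^ 2 * (p₁ ^ 2 + 1) :=
    ⟨p₂ ^ 2 * x - 2 * z * p₂ + 3 * y * z - x, by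
      linear_combination -(y * p₁ + p₂ * x - z) * h.det_outer + h.markov_eq'⟩
  exact (h.coprime_xy.pow_right).dvd_of_dvd_mul_left this

theorem dvd_right (h : MarkovFan p₁ x p₂ y p₃ m z) : y ∣ p₂ ^ 2 + 1 := by
  simpa using h.mirror.dvd_left

/-- Every Markov triple with largest entry `m` occurs as the denominators of a fan. -/
theorem exists_of_markov_eq (n : ℕ) : ∀ x y m : ℤ, 0 < x → 0 < y → x ≤ m → y ≤ m → m ≤ n →
    x ^ 2 + y ^ 2 + m ^ 2 = 3 * x * y * m → ∃ p₁ p₂ p₃ z, MarkovFan p₁ x p₂ y p₃ m z := by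
  induction n with
  | zero => intro x y m hx hy hxm hym hmn; omega
  | succ n ih =>
    have key : ∀ x y m : ℤ, 0 < x → 0 < y → x ≤ y → y ≤ m → m ≤ (n + 1 : ℕ) →
        x ^ 2 + y ^ 2 + m ^ 2 = 3 * x * y * m → ∃ p₁ p₂ p₃ z, MarkovFan p₁ x p₂ y p₃ m z := by
      intro x y m hx hy hxy hym hmn h
      rcases hym.eq_or_lt with rfl | hlt
      · have hx1 : x = 1 := by
          by_contra hne
          have : 2 ≤ x := by omega
          nlinarith [mul_pos hy hy]
        subst hx1
        have hy1 : y = 1 := by nlinarith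
        subst hy1
        exact ⟨_, _, _, _, root⟩
      · have hprod : m * (3 * x * y - m) = x ^ 2 + y ^ 2 := by linear_combination -h
        have hpos : 0 < 3 * x * y - m := by
          by_contra hc
          nlinarith [mul_pos hx hx, mul_pos hy hy]
        have hle : 3 * x * y - m ≤ y := by
          have : (m - y) * (3 * x * y - m - y) ≤ 0 := by
            nlinarith [mul_pos hy hy, mul_nonneg (mul_pos hy hy).le (sub_nonneg.2 (show 1 ≤ x from hx))]
          by_contra hc
          nlinarith
        obtain ⟨p₁, p₂, p₃, z, hf⟩ := ih x (3 * x * y - m) y hx hpos hxy hle (by push_cast at hmn; omega)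
          (by linear_combination h)
        have := hf.left
        rw [show 3 * x * y - (3 * x * y - m) = m by ring] at this
        exact ⟨_, _, _, _, this⟩
    intro x y m hx hy hxm hym hmn h
    rcases le_total x y with hxy | hxy
    · exact key x y m hx hy hxy hym hmn h
    · obtain ⟨p₁, p₂, p₃, z, hf⟩ := key y x m hy hx hxy hxm hmn (by linear_combination h)
      exact ⟨_, _, _, _, hf.mirror⟩

end MarkovFan

/-- If `a` is a primitive vector, witnessed by two coprime determinants, then every integer vector
parallel to `a` is an integer multiple of `a`. -/
theorem exists_eq_mul_of_det_eq_zero {a₁ a₂ b₁ b₂ w₁ w₂ p q : ℤ}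
    (hc : IsCoprime (a₁ * b₂ - a₂ * b₁) (a₁ * w₂ - a₂ * w₁)) (h : a₁ * q - a₂ * p = 0) :
    ∃ k, p = k * a₁ ∧ q = k * a₂ := by
  obtain ⟨u, v, huv⟩ := hc
  refine ⟨p * (u * b₂ + v * w₂) - q * (u * b₁ + v * w₁), ?_, ?_⟩
  · linear_combination (-p) * huv + (u * b₁ + v * w₁) * h
  · linear_combination (-q) * huv + (u * b₂ + v * w₂) * h

theorem le_form_of_eq_mul {α β γ K a₁ a₂ p q k : ℤ} (hK : 0 ≤ K)
    (ha : K ≤ α * a₁ ^ 2 + β * a₁ * a₂ + γ * a₂ ^ 2) (hv : p ≠ 0 ∨ q ≠ 0)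
    (hp : p = k * a₁) (hq : q = k * a₂) : K ≤ α * p ^ 2 + β * p * q + γ * q ^ 2 := by
  have hk : k ≠ 0 := by
    rintro rfl
    simp_all
  have hk2 : 1 ≤ k ^ 2 := by have := sq_pos_of_ne_zero hk; omega
  have : α * p ^ 2 + β * p * q + γ * q ^ 2 =
      k ^ 2 * (α * a₁ ^ 2 + β * a₁ * a₂ + γ * a₂ ^ 2) := by rw [hp, hq]; ring
  rw [this]
  nlinarith

/-- In a cone spanned by an edge of a Markov triangulation, a form that is at least `K` on both
generators and large on their product is at least `K` on every nonzero lattice vector. -/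
theorem cone_bound (α β γ K : ℤ) (hK : 0 ≤ K) (n : ℕ) :
    ∀ x y z a₁ a₂ b₁ b₂ w₁ w₂ w₁' w₂' p q : ℤ, 0 < x → 0 < y → 0 < z →
    x ^ 2 + y ^ 2 + z ^ 2 = 3 * x * y * z →
    IsCoprime x y → IsCoprime x z → IsCoprime y z →
    a₁ * b₂ - a₂ * b₁ = z →
    z * w₁ = x * a₁ + y * b₁ → z * w₂ = x * a₂ + y * b₂ →
    z * w₁' = y * a₁ - x * b₁ → z * w₂' = y * a₂ - x * b₂ →
    K ≤ α * a₁ ^ 2 + β * a₁ * a₂ + γ * a₂ ^ 2 →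
    K ≤ α * b₁ ^ 2 + β * b₁ * b₂ + γ * b₂ ^ 2 →
    3 * z * K ≤ 2 * α * a₁ * b₁ + β * (a₁ * b₂ + a₂ * b₁) + 2 * γ * a₂ * b₂ →
    0 ≤ p * b₂ - q * b₁ → 0 ≤ a₁ * q - a₂ * p → (p ≠ 0 ∨ q ≠ 0) →
    x * y * ((p * b₂ - q * b₁) * (a₁ * q - a₂ * p)) < n →
    K ≤ α * p ^ 2 + β * p * q + γ * q ^ 2 := by
  induction n with
  | zero =>
    intro x y z a₁ a₂ b₁ b₂ w₁ w₂ w₁' w₂' p q hx hy hz _ _ _ _ _ _ _ _ _ _ _ _ hS hT _ hn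
    have := mul_nonneg (mul_pos hx hy).le (mul_nonneg hS hT)
    push_cast at hn
    omega
  | succ n ih =>
    intro x y z a₁ a₂ b₁ b₂ w₁ w₂ w₁' w₂' p q hx hy hz hM hxy hxz hyz hdet hw₁ hw₂ hw₁' hw₂'
      hQa hQb hB hS hT hv hn
    have haw : a₁ * w₂ - a₂ * w₁ = y := by
      apply mul_left_cancel₀ hz.ne'
      linear_combination a₁ * hw₂ - a₂ * hw₁ + y * hdet
    have hwb : w₁ * b₂ - w₂ * b₁ = x := by
      apply mul_left_cancel₀ hz.ne'
      linear_combination b₂ * hw₁ - b₁ * hw₂ + x * hdet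
    rcases hT.eq_or_lt with hT0 | hTpos
    · obtain ⟨k, hp, hq⟩ := exists_eq_mul_of_det_eq_zero (a₁ := a₁) (a₂ := a₂) (b₁ := b₁)
        (b₂ := b₂) (w₁ := w₁) (w₂ := w₂) (by rw [hdet, haw]; exact hyz.symm) hT0.symm
      exact le_form_of_eq_mul hK hQa hv hp hq
    rcases hS.eq_or_lt with hS0 | hSpos
    · obtain ⟨k, hp, hq⟩ := exists_eq_mul_of_det_eq_zero (a₁ := b₁) (a₂ := b₂) (b₁ := a₁)
        (b₂ := a₂) (w₁ := w₁) (w₂ := w₂) (p := p) (q := q)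
        (by
          rw [show b₁ * a₂ - b₂ * a₁ = -z by linear_combination -hdet,
            show b₁ * w₂ - b₂ * w₁ = -x by linear_combination -hwb]
          exact hxz.symm.neg_neg) (by linear_combination hS0)
      exact le_form_of_eq_mul hK hQb hv hp hq
    set S := p * b₂ - q * b₁ with hSdef
    set T := a₁ * q - a₂ * p with hTdef
    have hQw : K ≤ α * w₁ ^ 2 + β * w₁ * w₂ + γ * w₂ ^ 2 := by
      have : z ^ 2 * (α * w₁ ^ 2 + β * w₁ * w₂ + γ * w₂ ^ 2) =
          x ^ 2 * (α * a₁ ^ 2 + β * a₁ * a₂ + γ * a₂ ^ 2) +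
          y ^ 2 * (α * b₁ ^ 2 + β * b₁ * b₂ + γ * b₂ ^ 2) +
          x * y * (2 * α * a₁ * b₁ + β * (a₁ * b₂ + a₂ * b₁) + 2 * γ * a₂ * b₂) := by
        calc _ = α * (z * w₁) ^ 2 + β * (z * w₁) * (z * w₂) + γ * (z * w₂) ^ 2 := by ring
          _ = _ := by rw [hw₁, hw₂]; ring
      have h1 := mul_le_mul_of_nonneg_left hQa (sq_nonneg x)
      have h2 := mul_le_mul_of_nonneg_left hQb (sq_nonneg y)
      have h3 := mul_le_mul_of_nonneg_left hB (mul_pos hx hy).le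
      have h4 : z ^ 2 * K ≤ x ^ 2 * K + y ^ 2 * K + x * y * (3 * z * K) := by
        have : x ^ 2 * K + y ^ 2 * K + x * y * (3 * z * K) =
            z ^ 2 * K + 2 * (x ^ 2 + y ^ 2) * K := by linear_combination (-K) * hM
        have : 0 ≤ 2 * (x ^ 2 + y ^ 2) * K := by positivity
        omega
      refine le_of_mul_le_mul_left ?_ (pow_pos hz 2)
      omega
    have hzdet : z * (w₁ * q - w₂ * p) = x * T - y * S := by
      linear_combination q * hw₁ - p * hw₂
    rcases le_or_gt (w₁ * q - w₂ * p) 0 with hle | hgt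
    · refine ih z x y a₁ a₂ w₁ w₂ (3 * x * a₁ - w₁') (3 * x * a₂ - w₂') (-b₁) (-b₂) p q hz hx hy
        (by linear_combination hM) hxz.symm hyz.symm hxy haw ?_ ?_ ?_ ?_ hQa hQw ?_
        (by linarith) hT hv ?_
      · apply mul_left_cancel₀ hz.ne'
        linear_combination (-y) * hw₁' - x * hw₁ - a₁ * hM
      · apply mul_left_cancel₀ hz.ne'
        linear_combination (-y) * hw₂' - x * hw₂ - a₂ * hM
      · linear_combination hw₁
      · linear_combination hw₂
      · refine le_of_mul_le_mul_left ?_ hz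
        have h1 : z * (2 * α * a₁ * w₁ + β * (a₁ * w₂ + a₂ * w₁) + 2 * γ * a₂ * w₂) =
            2 * x * (α * a₁ ^ 2 + β * a₁ * a₂ + γ * a₂ ^ 2) +
            y * (2 * α * a₁ * b₁ + β * (a₁ * b₂ + a₂ * b₁) + 2 * γ * a₂ * b₂) := by
          linear_combination (2 * α * a₁ + β * a₂) * hw₁ + (β * a₁ + 2 * γ * a₂) * hw₂
        rw [h1]
        have h2 := mul_le_mul_of_nonneg_left hB hy.le
        have h3 : 0 ≤ 2 * x * (α * a₁ ^ 2 + β * a₁ * a₂ + γ * a₂ ^ 2) :=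
          mul_nonneg (by omega) (hK.trans hQa)
        linarith
      · have : z * x * ((p * w₂ - q * w₁) * T) = x * y * (S * T) - x ^ 2 * T ^ 2 := by
          linear_combination (-x * T) * hzdet
        have h2 : 0 < x ^ 2 * T ^ 2 := by positivity
        push_cast at hn
        linarith
    · refine ih y z x w₁ w₂ b₁ b₂ (3 * y * b₁ + w₁') (3 * y * b₂ + w₂') a₁ a₂ p q hy hz hx
        (by linear_combination hM) hyz hxy.symm hxz.symm hwb ?_ ?_ ?_ ?_ hQw hQb ?_
        hS hgt.le hv ?_
      · apply mul_left_cancel₀ hz.ne'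
        linear_combination x * hw₁' - y * hw₁ - b₁ * hM
      · apply mul_left_cancel₀ hz.ne'
        linear_combination x * hw₂' - y * hw₂ - b₂ * hM
      · linear_combination -hw₁
      · linear_combination -hw₂
      · refine le_of_mul_le_mul_left ?_ hz
        have h1 : z * (2 * α * w₁ * b₁ + β * (w₁ * b₂ + w₂ * b₁) + 2 * γ * w₂ * b₂) =
            2 * y * (α * b₁ ^ 2 + β * b₁ * b₂ + γ * b₂ ^ 2) +
            x * (2 * α * a₁ * b₁ + β * (a₁ * b₂ + a₂ * b₁) + 2 * γ * a₂ * b₂) := by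
          linear_combination (2 * α * b₁ + β * b₂) * hw₁ + (β * b₁ + 2 * γ * b₂) * hw₂
        rw [h1]
        have h2 := mul_le_mul_of_nonneg_left hB hx.le
        have h3 : 0 ≤ 2 * y * (α * b₁ ^ 2 + β * b₁ * b₂ + γ * b₂ ^ 2) :=
          mul_nonneg (by omega) (hK.trans hQb)
        linarith
      · have : y * z * (S * (w₁ * q - w₂ * p)) = x * y * (S * T) - y ^ 2 * S ^ 2 := by
          linear_combination (y * S) * hzdet
        have h2 : 0 < y ^ 2 * S ^ 2 := by positivity
        push_cast at hn
        linarith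

/-- The quadratic form `m² F`, where `F` is the Markov form of the fraction `c/m`, normalized
by `F(1,0) = 1`. -/
def scaledMarkovForm (c m p q : ℤ) : ℤ :=
  (p * m - c * q) ^ 2 + 3 * m * (p * m - c * q) * q + q ^ 2

/-- The half-turn exchanging `(1, 0)` and `a` negates any form taking opposite values there. -/
theorem form_half_turn {α β γ a₁ a₂ l p q : ℤ} (h₂ : a₂ ≠ 0) (hl : a₁ ^ 2 + 1 = a₂ * l)
    (ha : α * a₁ ^ 2 + β * a₁ * a₂ + γ * a₂ ^ 2 = -α) :
    α * (a₁ * p - l * q) ^ 2 + β * (a₁ * p - l * q) * (a₂ * p - a₁ * q) +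
      γ * (a₂ * p - a₁ * q) ^ 2 = -(α * p ^ 2 + β * p * q + γ * q ^ 2) := by
  have hN : α * l + β * a₁ + γ * a₂ = 0 := by
    apply mul_left_cancel₀ h₂
    linear_combination ha - α * hl
  linear_combination p ^ 2 * ha + (-2 * a₁ * p * q + l * q ^ 2) * hN + (β * p * q + γ * q ^ 2) * hl

namespace MarkovFan

variable {p₁ x p₂ y p₃ m z : ℤ}

theorem le_abs_scaledMarkovForm_aux (h : MarkovFan p₁ x p₂ y p₃ m z) (n : ℕ) :
    ∀ p q : ℤ, 0 ≤ q → q ≤ n → (p ≠ 0 ∨ q ≠ 0) → m ^ 2 ≤ |scaledMarkovForm p₃ m p q| := by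
  have hx := h.x_pos
  have hy := h.y_pos
  have hm := h.m_pos
  have hM := h.markov_eq
  have hz := h.vieta
  have hzm := h.z_mul_m
  have hd₁ := h.det_left
  have hd₂ := h.det_right
  have hd₃ := h.det_outer
  have hform : ∀ p q, scaledMarkovForm p₃ m p q = m ^ 2 * p ^ 2 + (3 * m ^ 2 - 2 * m * p₃) * p * q
      + (p₃ ^ 2 - 3 * m * p₃ + 1) * q ^ 2 := by
    intro p q; unfold scaledMarkovForm; ring
  have cone_right : ∀ p q : ℤ, 0 ≤ q → 0 ≤ p * m - p₃ * q → (p ≠ 0 ∨ q ≠ 0) →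
      m ^ 2 ≤ |scaledMarkovForm p₃ m p q| := by
    intro p q hq hE hv
    refine le_trans ?_ (le_abs_self _)
    rw [hform]
    refine cone_bound _ _ _ _ (sq_nonneg m) _ x y m 1 0 p₃ m p₂ y (-p₁) (-x) p q hx hy hm hM
      h.coprime_xy h.coprime_xm h.coprime_ym (by ring) ?_ ?_ ?_ ?_ ?_ ?_ ?_ ?_ ?_ hv
      (Int.lt_add_one_of_le (Int.self_le_toNat _))
    · linear_combination hd₂
    · ring
    · linear_combination hd₁
    · ring
    · apply le_of_eq; ring
    · apply le_of_eq; ring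
    · apply le_of_eq; ring
    · linarith
    · linarith
  have form_neg : ∀ p q, scaledMarkovForm p₃ m (-p) (-q) = scaledMarkovForm p₃ m p q := by
    intro p q; unfold scaledMarkovForm; ring
  have cone_left : ∀ p q : ℤ, 0 ≤ q → p * m - p₃ * q + 3 * m * q ≤ 0 → (p ≠ 0 ∨ q ≠ 0) →
      m ^ 2 ≤ |scaledMarkovForm p₃ m p q| := by
    intro p q hq hE hv
    rw [← form_neg]
    refine le_trans ?_ (le_abs_self _)
    rw [hform]
    refine cone_bound _ _ _ _ (sq_nonneg m) _ x y m (3 * m - p₃) (-m) 1 0 (3 * x - p₁) (-x)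
      (3 * y - p₂) (-y) (-p) (-q) hx hy hm hM
      h.coprime_xy h.coprime_xm h.coprime_ym (by ring) ?_ ?_ ?_ ?_ ?_ ?_ ?_ ?_ ?_ (by omega)
      (Int.lt_add_one_of_le (Int.self_le_toNat _))
    · linear_combination hd₁
    · ring
    · linear_combination -hd₂
    · ring
    · apply le_of_eq; ring
    · apply le_of_eq; ring
    · apply le_of_eq; ring
    · linarith
    · linarith
  have hA : scaledMarkovForm p₃ m p₁ x = -m ^ 2 := by
    unfold scaledMarkovForm
    linear_combination (p₃ * x - p₁ * m + y - 3 * m * x) * hd₁ + hM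
  have hB : scaledMarkovForm p₃ m (p₂ - 3 * y) y = -m ^ 2 := by
    unfold scaledMarkovForm
    linear_combination (p₂ * m - p₃ * y + x - 3 * m * y) * hd₂ + hM
  have cone_mid : ∀ p q : ℤ, 0 ≤ p * y - q * (p₂ - 3 * y) → 0 ≤ p₁ * q - x * p →
      (p ≠ 0 ∨ q ≠ 0) → m ^ 2 ≤ |scaledMarkovForm p₃ m p q| := by
    intro p q hS hT hv
    refine le_trans ?_ (neg_le_abs _)
    rw [hform] at hA hB ⊢
    have := cone_bound (-m ^ 2) (-(3 * m ^ 2 - 2 * m * p₃)) (-(p₃ ^ 2 - 3 * m * p₃ + 1)) (m ^ 2)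
      (sq_nonneg m) _ x y m p₁ x (p₂ - 3 * y) y (3 * y * p₁ - p₃) z 1 0 p q hx hy hm hM
      h.coprime_xy h.coprime_xm h.coprime_ym ?_ ?_ ?_ ?_ ?_ ?_ ?_ ?_ hS hT hv
      (Int.lt_add_one_of_le (Int.self_le_toNat _))
    · linarith
    · linear_combination -hd₃ - hz
    · linear_combination -(p₃ * hd₃ - p₂ * hd₁ - p₁ * hd₂) - p₃ * hz - 3 * y * hd₁
    · linear_combination hzm
    · linear_combination hd₃ + hz
    · ring
    · linarith
    · linarith
    · apply le_of_eq
      have hEA : p₁ * m - p₃ * x = -y := by linear_combination -hd₁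
      have hEB : (p₂ - 3 * y) * m - p₃ * y = x - 3 * y * m := by linear_combination hd₂
      have hB₂ : ∀ b c : ℤ, 2 * (-m ^ 2) * p₁ * b + -(3 * m ^ 2 - 2 * m * p₃) * (p₁ * c + x * b) +
          2 * -(p₃ ^ 2 - 3 * m * p₃ + 1) * x * c = -(2 * (p₁ * m - p₃ * x) * (b * m - p₃ * c) +
          3 * m * ((p₁ * m - p₃ * x) * c + (b * m - p₃ * c) * x) + 2 * x * c) := by
        intro b c; ring
      rw [hB₂, hEA, hEB]
      linear_combination 3 * m * hM
  induction n with
  | zero =>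
    intro p q hq hqn hv
    obtain rfl : q = 0 := by push_cast at hqn; omega
    have hp : p ≠ 0 := by omega
    have : 1 ≤ p ^ 2 := by have := sq_pos_of_ne_zero hp; omega
    refine le_trans ?_ (le_abs_self _)
    rw [hform]
    nlinarith
  | succ n ih =>
    intro p q hq hqn hv
    rcases le_or_gt 0 (p * m - p₃ * q) with hC | hC
    · exact cone_right p q hq hC hv
    rcases le_or_gt (p * m - p₃ * q + 3 * m * q) 0 with hD | hD
    · exact cone_left p q hq hD hv
    rcases le_or_gt (x * p - p₁ * q) 0 with hT | hT
    swap
    · obtain ⟨l, hl⟩ := h.dvd_left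
      have hR := form_half_turn (p := p) (q := q) hx.ne' hl (by rw [← hform, hA])
      rw [← hform, ← hform] at hR
      rw [← abs_neg, ← hR]
      refine ih _ _ hT.le ?_ (Or.inr hT.ne')
      have : x * p - p₁ * q < q := by
        refine lt_of_mul_lt_mul_left ?_ hm.le
        nlinarith [h.y_le]
      push_cast at hqn
      omega
    rcases le_or_gt 0 (p * y - q * (p₂ - 3 * y)) with hS | hS
    · exact cone_mid p q hS (by linarith) hv
    · obtain ⟨l, hl⟩ := h.dvd_right
      have hR := form_half_turn (p := p) (q := q) (l := l - 6 * p₂ + 9 * y) (a₁ := p₂ - 3 * y)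
        hy.ne' (by linear_combination hl) (by rw [← hform, hB])
      rw [← hform, ← hform] at hR
      rw [← abs_neg, ← hR, ← form_neg]
      refine ih _ _ (by linarith) ?_ (Or.inr (by linarith : _ < _).ne')
      have : -(y * p - (p₂ - 3 * y) * q) < q := by
        refine lt_of_mul_lt_mul_left ?_ hm.le
        nlinarith [h.x_le]
      push_cast at hqn
      omega

theorem le_abs_scaledMarkovForm (h : MarkovFan p₁ x p₂ y p₃ m z) (p q : ℤ) (hv : p ≠ 0 ∨ q ≠ 0) :
    m ^ 2 ≤ |scaledMarkovForm p₃ m p q| := by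
  rcases le_total 0 q with hq | hq
  · exact h.le_abs_scaledMarkovForm_aux q.toNat p q hq (Int.self_le_toNat q) hv
  · have : scaledMarkovForm p₃ m (-p) (-q) = scaledMarkovForm p₃ m p q := by
      unfold scaledMarkovForm; ring
    rw [← this]
    exact h.le_abs_scaledMarkovForm_aux (-q).toNat (-p) (-q) (by omega) (Int.self_le_toNat _)
      (by omega)

end MarkovFan

/-- The form `(p - θq)(p - φq)` has absolute value at least `1` on all nonzero integer vectors. -/
def IsAdmissible (θ φ : ℝ) : Prop :=
  ∀ p q : ℤ, (p ≠ 0 ∨ q ≠ 0) → 1 ≤ |((p : ℝ) - θ * q) * (p - φ * q)|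

namespace IsAdmissible

variable {θ φ : ℝ}

theorem add_int (h : IsAdmissible θ φ) (k : ℤ) : IsAdmissible (θ + k) (φ + k) := by
  intro p q hv
  have := h (p - k * q) q (by
    by_contra hc
    push Not at hc
    obtain ⟨h1, rfl⟩ := hc
    simp_all)
  push_cast at this
  convert this using 2
  ring

theorem reflect (h : IsAdmissible θ φ) : IsAdmissible (-φ - 3) (-θ - 3) := by
  intro p q hv
  have := h (-p - 3 * q) q (by omega)
  push_cast at this
  convert this using 2
  ring

theorem mul_ne (h : IsAdmissible θ φ) (p : ℤ) {q : ℤ} (hq : q ≠ 0) : φ * q ≠ p := by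
  intro he
  have := h p q (Or.inr hq)
  rw [he] at this
  norm_num at this

theorem one_le_of_pos (h : IsAdmissible θ φ) {p q : ℤ} (h₁ : θ * q < p) (h₂ : φ * q < p) :
    1 ≤ ((p : ℝ) - θ * q) * (p - φ * q) := by
  have := h p q (by
    by_contra hc
    push Not at hc
    obtain ⟨rfl, rfl⟩ := hc
    simp at h₁)
  rwa [abs_of_pos (mul_pos (sub_pos.2 h₁) (sub_pos.2 h₂))] at this

theorem one_le_of_mid (h : IsAdmissible θ φ) {p q : ℤ} (h₁ : θ * q < p) (h₂ : p < φ * q) :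
    1 ≤ ((p : ℝ) - θ * q) * (φ * q - p) := by
  have := h p q (by
    by_contra hc
    push Not at hc
    obtain ⟨rfl, rfl⟩ := hc
    simp at h₁)
  rwa [abs_of_neg (mul_neg_of_pos_of_neg (sub_pos.2 h₁) (sub_neg.2 h₂)), ← mul_neg, neg_sub] at this

end IsAdmissible

/-- The left fraction of a fan lies in `(θ, φ)` and the right one in `(θ + 3, φ + 3)`. -/
structure MarkovFan.Straddles (p₁ x p₂ y : ℤ) (θ φ : ℝ) : Prop where
  left_gt : θ * x < p₁
  left_lt : p₁ < φ * x
  right_gt : (θ + 3) * y < p₂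
  right_lt : p₂ < (φ + 3) * y

namespace MarkovFan

variable {p₁ x p₂ y p₃ m z : ℤ} {θ φ : ℝ}

theorem Straddles.mirror (hs : Straddles p₁ x p₂ y θ φ) :
    Straddles (-p₂) y (-p₁) x (-φ - 3) (-θ - 3) where
  left_gt := by push_cast; linarith [hs.right_lt]
  left_lt := by push_cast; linarith [hs.right_gt]
  right_gt := by push_cast; linarith [hs.left_lt]
  right_lt := by push_cast; linarith [hs.left_gt]

theorem Straddles.right (hs : Straddles p₁ x p₂ y θ φ) (h : MarkovFan p₁ x p₂ y p₃ m z)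
    (hlt : p₃ < φ * m) : Straddles p₃ m p₂ y θ φ where
  left_gt := by
    have hx : (0 : ℝ) < x := by exact_mod_cast h.x_pos
    have hy : (0 : ℝ) < y := by exact_mod_cast h.y_pos
    have hm : (0 : ℝ) < m := by exact_mod_cast h.m_pos
    have hd : (p₃ * x - p₁ * m : ℝ) = y := by exact_mod_cast h.det_left
    have := mul_lt_mul_of_pos_right hs.left_gt hm
    refine lt_of_mul_lt_mul_right ?_ hx.le
    linarith
  left_lt := hlt
  right_gt := hs.right_gt
  right_lt := hs.right_lt

theorem Straddles.left (hs : Straddles p₁ x p₂ y θ φ) (h : MarkovFan p₁ x p₂ y p₃ m z)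
    (hlt : (θ + 3) * m < p₃) : Straddles p₁ x p₃ m θ φ := by
  have := (hs.mirror.right h.mirror (by push_cast; linarith)).mirror
  simpa using this

/-- The denominators of a straddling fan are bounded in terms of `3 - (φ - θ)`. -/
theorem Straddles.mul_sq_le (hs : Straddles p₁ x p₂ y θ φ) (h : MarkovFan p₁ x p₂ y p₃ m z)
    (hadm : IsAdmissible θ φ) (hlt : φ - θ < 3) (hz : z ≤ x * y) :
    2 * (3 - (φ - θ)) * (y : ℝ) ^ 2 ≤ 1 := by
  have hx : (0 : ℝ) < x := by exact_mod_cast h.x_pos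
  have hy : (0 : ℝ) < y := by exact_mod_cast h.y_pos
  have hz' : (z : ℝ) ≤ x * y := by exact_mod_cast hz
  have hd : (p₂ * x - p₁ * y : ℝ) = z := by exact_mod_cast h.det_outer
  have hM : (x ^ 2 + y ^ 2 + z ^ 2 : ℝ) = 3 * x * y * z := by exact_mod_cast h.markov_eq'
  have hA := hadm.one_le_of_mid hs.left_gt hs.left_lt
  set a := φ * x - p₁ with ha
  have ha0 : 0 < a := sub_pos.2 hs.left_lt
  have hA' : 1 ≤ ((φ - θ) * x - a) * a := by convert hA using 2; rw [ha]; ring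
  have h1 : 0 < z - (3 - (φ - θ)) * x * y - a * y := by
    have := mul_lt_mul_of_pos_right hs.right_gt hx
    have e : z - (3 - (φ - θ)) * x * y - a * y = p₂ * x - (θ + 3) * y * x := by
      rw [ha, ← hd]; ring
    rw [e]; linarith
  have hδ : 0 < 3 - (φ - θ) := by linarith
  set δ := 3 - (φ - θ) with hδ'
  have ht : φ - θ = 3 - δ := by rw [hδ']; ring
  rw [ht] at hA'
  have hxy := mul_pos hx hy
  have h2 : 0 ≤ 3 * x * y - z - a * y := by nlinarith [mul_pos hδ hxy]
  have h3 : 0 ≤ x ^ 2 + y ^ 2 - δ * (x * y) * (3 * x * y - z) - y ^ 2 * (((3 - δ) * x - a) * a) := by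
    have := mul_nonneg h1.le h2
    calc (0 : ℝ) ≤ _ := this
      _ = _ := by linear_combination -hM
  have h4 : y ^ 2 * 1 ≤ (y : ℝ) ^ 2 * (((3 - δ) * x - a) * a) :=
    mul_le_mul_of_nonneg_left hA' (sq_nonneg _)
  have h5 : δ * (x * y) * (2 * (x * y)) ≤ δ * (x * y) * (3 * x * y - z) :=
    mul_le_mul_of_nonneg_left (by linarith) (by positivity)
  refine le_of_mul_le_mul_left ?_ (pow_pos hx 2)
  linarith

theorem Straddles.le_of_gap (hs : Straddles p₁ x p₂ y θ φ) (h : MarkovFan p₁ x p₂ y p₃ m z)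
    (hadm : IsAdmissible θ φ) :
    0 ≤ x * (1 - (p₃ - φ * m) * (p₃ - θ * m)) + y * ((p₃ - φ * m) - ((θ + 3) * m - p₃)) := by
  have hx : (0 : ℝ) < x := by exact_mod_cast h.x_pos
  have hd : (p₃ * x - p₁ * m : ℝ) = y := by exact_mod_cast h.det_left
  have hM : (x ^ 2 + y ^ 2 + m ^ 2 : ℝ) = 3 * x * y * m := by exact_mod_cast h.markov_eq
  have hA := hadm.one_le_of_mid hs.left_gt hs.left_lt
  have hA' := mul_le_mul_of_nonneg_left hA (sq_nonneg (m : ℝ))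
  have e₁ : m * (φ * x - p₁) = y - x * (p₃ - φ * m) := by linear_combination hd
  have e₂ : m * (p₁ - θ * x) = 3 * x * m - y - x * ((θ + 3) * m - p₃) := by
    linear_combination -hd
  have e : (m : ℝ) ^ 2 * ((p₁ - θ * x) * (φ * x - p₁)) =
      (3 * x * m - y - x * ((θ + 3) * m - p₃)) * (y - x * (p₃ - φ * m)) := by
    rw [← e₁, ← e₂]; ring
  rw [e] at hA'
  refine le_of_mul_le_mul_left ?_ hx
  nlinarith

theorem Straddles.sq_eq_of_gap (hs : Straddles p₁ x p₂ y θ φ) (h : MarkovFan p₁ x p₂ y p₃ m z)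
    (hadm : IsAdmissible θ φ) (h₀ : θ < φ) (h₁ : φ * m < p₃) (h₂ : p₃ < (θ + 3) * m) :
    (φ - θ) ^ 2 = 9 - 4 / (m : ℝ) ^ 2 := by
  have hx : (0 : ℝ) < x := by exact_mod_cast h.x_pos
  have hy : (0 : ℝ) < y := by exact_mod_cast h.y_pos
  have hm : (0 : ℝ) < m := by exact_mod_cast h.m_pos
  have hθ : θ * m < p₃ := (mul_lt_mul_of_pos_right h₀ hm).trans h₁
  have hC := hadm.one_le_of_pos hθ h₁
  have hl := hs.le_of_gap h hadm
  have hC' := hadm.reflect.one_le_of_pos (p := -p₃) (q := m) (by push_cast; nlinarith)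
    (by push_cast; linarith)
  have hr := hs.mirror.le_of_gap h.mirror hadm.reflect
  push_cast at hC' hr
  set e₁ := p₃ - φ * m with he₁
  set e₂ := (θ + 3) * m - p₃ with he₂
  have hc : 1 ≤ (3 * m - e₂) * e₁ := by
    convert hC using 2; rw [he₂]; ring
  have hc' : 1 ≤ (3 * m - e₁) * e₂ := by
    calc 1 ≤ _ := hC'
      _ = _ := by rw [he₁, he₂]; ring
  have hl' : 0 ≤ x * (1 - (3 * m - e₂) * e₁) + y * (e₁ - e₂) := by
    calc 0 ≤ _ := hl
      _ = _ := by rw [he₁, he₂]; ring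
  have hr' : 0 ≤ y * (1 - (3 * m - e₁) * e₂) + x * (e₂ - e₁) := by
    calc 0 ≤ _ := hr
      _ = _ := by rw [he₁, he₂]; ring
  have hle : e₂ ≤ e₁ := by
    have := mul_nonneg hx.le (sub_nonneg.2 hc)
    by_contra! hcon
    nlinarith [mul_pos hy (sub_pos.2 hcon)]
  have hge : e₁ ≤ e₂ := by
    have := mul_nonneg hy.le (sub_nonneg.2 hc')
    by_contra! hcon
    nlinarith [mul_pos hx (sub_pos.2 hcon)]
  have heq : e₂ = e₁ := le_antisymm hle hge
  have h1 : (3 * m - e₁) * e₁ = 1 := by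
    rw [heq] at hl' hc
    refine le_antisymm ?_ hc
    by_contra! hcon
    nlinarith [mul_pos hx (sub_pos.2 hcon)]
  have ht : (φ - θ) * m = 3 * m - 2 * e₁ := by linear_combination -heq + he₁ + he₂
  field_simp
  rw [← mul_pow, ht]
  linear_combination -4 * h1

theorem Straddles.exists_sq_eq_or (hs : Straddles p₁ x p₂ y θ φ)
    (h : MarkovFan p₁ x p₂ y p₃ m z) (hadm : IsAdmissible θ φ) (h₀ : θ < φ) :
    (φ - θ) ^ 2 = 9 - 4 / (m : ℝ) ^ 2 ∨ Straddles p₁ x p₃ m θ φ ∨ Straddles p₃ m p₂ y θ φ := by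
  rcases lt_or_gt_of_ne (hadm.mul_ne p₃ h.m_pos.ne') with h₁ | h₁
  · have hne := hadm.reflect.mul_ne (-p₃) h.m_pos.ne'
    push_cast at hne
    rcases lt_or_gt_of_ne hne with h₂ | h₂
    · exact Or.inl (hs.sq_eq_of_gap h hadm h₀ h₁ (by linarith))
    · exact Or.inr (Or.inl (hs.left h (by linarith)))
  · exact Or.inr (Or.inr (hs.right h h₁))

theorem Straddles.exists_sq_eq (hadm : IsAdmissible θ φ) (h₀ : θ < φ) (hlt : φ - θ < 3) (n : ℕ) :
    ∀ {p₁ x p₂ y p₃ m z : ℤ}, Straddles p₁ x p₂ y θ φ → MarkovFan p₁ x p₂ y p₃ m z →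
      z ≤ x * y → 1 < (3 - (φ - θ)) * (x + y + n) →
      ∃ p₁ x p₂ y p₃ m z, MarkovFan p₁ x p₂ y p₃ m z ∧ (φ - θ) ^ 2 = 9 - 4 / (m : ℝ) ^ 2 := by
  induction n with
  | zero =>
    intro p₁ x p₂ y p₃ m z hs h hz hn
    have h1 := hs.mul_sq_le h hadm hlt hz
    have h2 := hs.mirror.mul_sq_le h.mirror hadm.reflect (by linarith) (by linarith)
    have hx : (1 : ℝ) ≤ x := by exact_mod_cast h.x_pos
    have hy : (1 : ℝ) ≤ y := by exact_mod_cast h.y_pos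
    rw [show -θ - 3 - (-φ - 3) = φ - θ by ring] at h2
    have hδ : 0 < 3 - (φ - θ) := by linarith
    push_cast at hn
    nlinarith [mul_nonneg (mul_nonneg hδ.le (sub_nonneg.2 hx)) (zero_le_one.trans hx),
      mul_nonneg (mul_nonneg hδ.le (sub_nonneg.2 hy)) (zero_le_one.trans hy)]
  | succ n ih =>
    intro p₁ x p₂ y p₃ m z hs h hz hn
    have hx := h.x_pos
    have hy := h.y_pos
    have hm := h.vieta
    have hδ : 0 ≤ 3 - (φ - θ) := by linarith
    rcases hs.exists_sq_eq_or h hadm h₀ with he | hs' | hs'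
    · exact ⟨_, _, _, _, _, _, _, h, he⟩
    · refine ih hs' h.left h.y_le_mul (hn.trans_le ?_)
      have : y + 1 ≤ m := by nlinarith
      have : (y + 1 : ℝ) ≤ m := by exact_mod_cast this
      refine mul_le_mul_of_nonneg_left ?_ hδ
      push_cast; linarith
    · refine ih hs' h.right (by linarith [h.mirror.y_le_mul]) (hn.trans_le ?_)
      have : x + 1 ≤ m := by nlinarith
      have : (x + 1 : ℝ) ≤ m := by exact_mod_cast this
      refine mul_le_mul_of_nonneg_left ?_ hδ
      push_cast; linarith

end MarkovFan

theorem IsAdmissible.exists_markovFan {θ φ : ℝ} (hadm : IsAdmissible θ φ) (h₂ : 2 ≤ φ - θ)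
    (h₃ : φ - θ < 3) :
    ∃ p₁ x p₂ y p₃ m z, MarkovFan p₁ x p₂ y p₃ m z ∧ (φ - θ) ^ 2 = 9 - 4 / (m : ℝ) ^ 2 := by
  wlog hφ : -1 < φ ∧ φ < 0 generalizing θ φ
  · have hf := hadm.mul_ne ⌊φ⌋ one_ne_zero
    simp only [Int.cast_one, mul_one] at hf
    have h1 := lt_of_le_of_ne (Int.floor_le φ) hf.symm
    have h2 := Int.lt_floor_add_one φ
    have := this (hadm.add_int (-⌊φ⌋ - 1)) (by linarith) (by linarith)
      (by push_cast; constructor <;> linarith)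
    rwa [add_sub_add_right_eq_sub] at this
  obtain ⟨hφ₁, hφ₂⟩ := hφ
  have h₀ : θ < φ := by linarith
  have hs : MarkovFan.Straddles (-1) 1 1 1 θ φ := by
    constructor <;> push_cast <;> linarith
  obtain ⟨n, hn⟩ := exists_nat_gt (1 / (3 - (φ - θ)))
  rw [div_lt_iff₀' (by linarith)] at hn
  rcases hs.exists_sq_eq_or MarkovFan.root hadm h₀ with he | hs' | hs'
  · exact ⟨_, _, _, _, _, _, _, MarkovFan.root, he⟩
  · refine hs'.exists_sq_eq hadm h₀ h₃ n MarkovFan.root.left (by norm_num) (hn.trans_le ?_)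
    exact mul_le_mul_of_nonneg_left (by push_cast; linarith) (by linarith)
  · refine hs'.exists_sq_eq hadm h₀ h₃ n MarkovFan.root.right (by norm_num) (hn.trans_le ?_)
    exact mul_le_mul_of_nonneg_left (by push_cast; linarith) (by linarith)

open Filter Topology in
/-- A compactness principle: if forms `(X - θY)(X - (θ + T)Y)` with `T` close to `t` are at least
almost `1` on large boxes, then some form with `T = t` is admissible. -/
theorem IsAdmissible.exists_of_forall_box {t : ℝ}
    (H : ∀ N : ℕ, ∃ θ ∈ Set.Icc (0 : ℝ) 1, ∃ T : ℝ, |T - t| ≤ 1 / ((N : ℝ) + 1) ∧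
      ∀ X Y : ℤ, (X ≠ 0 ∨ Y ≠ 0) → |X| ≤ N → |Y| ≤ N →
        1 - 1 / ((N : ℝ) + 1) ≤ |(X - θ * Y) * (X - (θ + T) * Y)|) :
    ∃ θ, IsAdmissible θ (θ + t) := by
  choose θ hθ T hT hF using H
  obtain ⟨θ', -, ψ, hψ, hlim⟩ := isCompact_Icc.tendsto_subseq hθ
  refine ⟨θ', fun X Y hv => ?_⟩
  have hone : Tendsto (fun N : ℕ => 1 / ((N : ℝ) + 1)) atTop (𝓝 0) :=
    tendsto_one_div_add_atTop_nhds_zero_nat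
  have hTlim : Tendsto (fun n => T (ψ n)) atTop (𝓝 t) := by
    have h0 : Tendsto T atTop (𝓝 t) := by
      rw [tendsto_iff_norm_sub_tendsto_zero]
      exact squeeze_zero (fun _ => norm_nonneg _) hT hone
    exact h0.comp hψ.tendsto_atTop
  have hlim' : Tendsto (fun n => θ (ψ n)) atTop (𝓝 θ') := hlim
  have hR : Tendsto (fun n => |((X : ℝ) - θ (ψ n) * Y) * (X - (θ (ψ n) + T (ψ n)) * Y)|) atTop
      (𝓝 |((X : ℝ) - θ' * Y) * (X - (θ' + t) * Y)|) :=
    (((hlim'.mul_const _).const_sub _).mul (((hlim'.add hTlim).mul_const _).const_sub _)).abs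
  have hL : Tendsto (fun n => 1 - 1 / ((ψ n : ℝ) + 1)) atTop (𝓝 1) := by
    simpa using (hone.comp hψ.tendsto_atTop).const_sub 1
  refine le_of_tendsto_of_tendsto hL hR ?_
  filter_upwards [eventually_ge_atTop (max X.natAbs Y.natAbs)] with n hn
  have hn' := hn.trans (hψ.id_le n)
  have h1 := (le_max_left _ _).trans hn'
  have h2 := (le_max_right _ _).trans hn'
  exact hF (ψ n) X Y hv (by rw [Int.abs_eq_natAbs]; exact_mod_cast h1)
    (by rw [Int.abs_eq_natAbs]; exact_mod_cast h2)

/-- A form representing `k` primitively is equivalent to `k (X - θY)(X - (θ + √Δ/|k|)Y)` with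
`θ` in the unit interval, up to sign. -/
theorem exists_reduced_form (a b c : ℝ) {p q : ℤ} (hpq : IsCoprime p q)
    (hk : a * p ^ 2 + b * p * q + c * q ^ 2 ≠ 0) (hD : 0 < b ^ 2 - 4 * a * c) :
    ∃ θ ∈ Set.Icc (0 : ℝ) 1, ∃ r s : ℤ, p * s - q * r = 1 ∧ ∀ X Y : ℤ,
      |a * ((p * X + r * Y : ℤ) : ℝ) ^ 2 + b * ((p * X + r * Y : ℤ) : ℝ) * ((q * X + s * Y : ℤ) : ℝ)
        + c * ((q * X + s * Y : ℤ) : ℝ) ^ 2| =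
      |a * p ^ 2 + b * p * q + c * q ^ 2| * |(X - θ * Y) * (X -
        (θ + √(b ^ 2 - 4 * a * c) / |a * p ^ 2 + b * p * q + c * q ^ 2|) * Y)| := by
  obtain ⟨u, v, huv⟩ := hpq
  have huv' : (u * p + v * q : ℝ) = 1 := by exact_mod_cast huv
  set k := a * p ^ 2 + b * p * q + c * q ^ 2 with hkdef
  set T := √(b ^ 2 - 4 * a * c) / |k| with hT
  set B := 2 * a * p * (-v) + b * (p * u - v * q) + 2 * c * q * u with hB
  set C := a * v ^ 2 - b * u * v + c * u ^ 2 with hC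
  have hdisc : B ^ 2 - 4 * k * C = b ^ 2 - 4 * a * c := by
    rw [hB, hC, hkdef]
    linear_combination (b ^ 2 - 4 * a * c) * (u * p + v * q + 1) * huv'
  have hT2 : T ^ 2 * k ^ 2 = b ^ 2 - 4 * a * c := by
    rw [hT, div_pow, sq_abs, Real.sq_sqrt hD.le]
    field_simp
  set θ := (-B / k - T) / 2 with hθ
  have hθk : (2 * θ + T) * k = -B := by
    rw [hθ]; field_simp; ring
  refine ⟨Int.fract θ, ⟨Int.fract_nonneg _, (Int.fract_lt_one _).le⟩, -v + ⌊θ⌋ * p, u + ⌊θ⌋ * q,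
    by linear_combination huv, fun X Y => ?_⟩
  rw [← abs_mul]
  congr 1
  have hf : Int.fract θ = θ - ⌊θ⌋ := rfl
  rw [hf]
  set j : ℝ := ((⌊θ⌋ : ℤ) : ℝ) with hj
  push_cast
  rw [← hj]
  have hkey : k * (k * ((X + j * Y - θ * Y) * (X + j * Y - (θ + T) * Y))) =
      k * (k * (X + j * Y) ^ 2 + B * (X + j * Y) * Y + C * Y ^ 2) := by
    have h4 : 4 * k ^ 2 * (θ * (θ + T)) = 4 * k * C := by
      linear_combination ((2 * θ + T) * k - B) * hθk - hT2 + hdisc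
    linear_combination (-k * (X + j * Y) * Y) * hθk + Y ^ 2 / 4 * h4
  have hkey' := mul_left_cancel₀ hk hkey
  rw [show (X : ℝ) - (θ - j) * Y = X + j * Y - θ * Y by ring,
    show (X : ℝ) - (θ - j + T) * Y = X + j * Y - (θ + T) * Y by ring, hkey', hkdef, hB, hC]
  ring

theorem Int.exists_coprime_mul {p q : ℤ} (h : p ≠ 0 ∨ q ≠ 0) :
    ∃ d p' q' : ℤ, 1 ≤ d ∧ IsCoprime p' q' ∧ p = d * p' ∧ q = d * q' := by
  have hpos : 0 < Int.gcd p q := Int.gcd_pos_iff.2 h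
  obtain ⟨p', q', hc, hp, hq⟩ := Int.exists_gcd_one hpos
  exact ⟨Int.gcd p q, p', q', by exact_mod_cast hpos, Int.isCoprime_iff_gcd_eq_one.2 hc,
    by rw [mul_comm]; exact hp, by rw [mul_comm]; exact hq⟩

theorem exists_le_abs_sub_mul {α : ℝ} (hα : Irrational α) (N : ℕ) :
    ∃ c > 0, ∀ P Q : ℤ, (P ≠ 0 ∨ Q ≠ 0) → |Q| < N → c ≤ |P - α * Q| := by
  induction N with
  | zero =>
    exact ⟨1, one_pos, fun P Q _ hQ => absurd hQ (by simp)⟩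
  | succ N ih =>
    obtain ⟨c, hc, H⟩ := ih
    rcases Nat.eq_zero_or_pos N with rfl | hN
    · refine ⟨1, one_pos, fun P Q hv hQ => ?_⟩
      have hQ0 : Q = 0 := by
        rw [← abs_nonpos_iff]; push_cast at hQ; omega
      subst hQ0
      simp only [ne_eq, not_true_eq_false, or_false] at hv
      have := Int.one_le_abs hv
      simpa using (by exact_mod_cast this : (1 : ℝ) ≤ |(P : ℝ)|)
    · have hirr : Irrational (α * N) := by
        simpa using hα.mul_natCast hN.ne'
      have hpos : 0 < |α * N - round (α * N)| :=
        abs_pos.2 (sub_ne_zero.2 (hirr.ne_int _))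
      refine ⟨min c |α * N - round (α * N)|, lt_min hc hpos, fun P Q hv hQ => ?_⟩
      rcases lt_or_ge |Q| N with hlt | hge
      · exact (min_le_left _ _).trans (H P Q hv hlt)
      · refine (min_le_right _ _).trans ?_
        have : |Q| = N := by push_cast at hQ; omega
        rcases (abs_eq (by positivity)).1 this with rfl | rfl
        · rw [abs_sub_comm (P : ℝ)]
          exact_mod_cast round_le (α * N) P
        · have := round_le (α * N) (-P)
          refine this.trans (le_of_eq ?_)
          push_cast
          congr 1; ring

theorem Int.ne_zero_or_of_det_eq_one {p q r s X Y : ℤ} (hdet : p * s - q * r = 1)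
    (hv : X ≠ 0 ∨ Y ≠ 0) : p * X + r * Y ≠ 0 ∨ q * X + s * Y ≠ 0 := by
  by_contra! hc
  have hX : X = 0 := by linear_combination s * hc.1 - r * hc.2 - X * hdet
  have hY : Y = 0 := by linear_combination p * hc.2 - q * hc.1 - Y * hdet
  simp_all

theorem exists_isAdmissible_of_mem_markovSpectrum {t : ℝ} (ht : t ∈ MarkovSpectrum) (h1 : 1 ≤ t) :
    ∃ θ, IsAdmissible θ (θ + t) := by
  obtain ⟨a, b, c, hD, htop, hval⟩ := ht
  have ht0 : 0 < t := by linarith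
  have hval' : markovVal a b c = ENNReal.ofReal t := by rw [← hval, ENNReal.ofReal_toReal htop]
  have hsqrt := Real.sqrt_pos.2 hD
  have hupper : ∀ P Q : ℤ, (P ≠ 0 ∨ Q ≠ 0) →
      √(b ^ 2 - 4 * a * c) ≤ t * |a * (P : ℝ) ^ 2 + b * P * Q + c * (Q : ℝ) ^ 2| := by
    intro P Q hv
    have : ENNReal.ofReal √(b ^ 2 - 4 * a * c) /
        ENNReal.ofReal |a * (P : ℝ) ^ 2 + b * P * Q + c * (Q : ℝ) ^ 2| ≤ ENNReal.ofReal t := by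
      rw [← hval']
      exact le_iSup₂_of_le (P, Q) (by simp only [ne_eq, Prod.mk.injEq]; tauto) le_rfl
    rw [ENNReal.div_le_iff_le_mul (Or.inr (by simp)) (Or.inl ENNReal.ofReal_ne_top),
      ← ENNReal.ofReal_mul ht0.le, ENNReal.ofReal_le_ofReal_iff (by positivity)] at this
    exact this
  refine IsAdmissible.exists_of_forall_box fun N => ?_
  set η : ℝ := 1 / ((N : ℝ) + 1) with hη
  have hη0 : 0 < η := by positivity
  have hη1 : η ≤ 1 := by
    rw [hη, div_le_one (by positivity)]; linarith [(Nat.cast_nonneg N : (0 : ℝ) ≤ N)]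
  obtain ⟨P, Q, hv, hPQ⟩ : ∃ P Q : ℤ, (P ≠ 0 ∨ Q ≠ 0) ∧
      (t - η) * |a * (P : ℝ) ^ 2 + b * P * Q + c * (Q : ℝ) ^ 2| < √(b ^ 2 - 4 * a * c) := by
    have : ENNReal.ofReal (t - η) < markovVal a b c := by
      rw [hval', ENNReal.ofReal_lt_ofReal_iff ht0]; linarith
    simp only [markovVal, lt_iSup_iff] at this
    obtain ⟨⟨P, Q⟩, hne, hlt⟩ := this
    refine ⟨P, Q, by simp only [ne_eq, Prod.mk.injEq] at hne; tauto, ?_⟩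
    by_contra! hcon
    refine hlt.not_ge (ENNReal.div_le_of_le_mul ?_)
    rw [← ENNReal.ofReal_mul (by linarith)]
    exact ENNReal.ofReal_le_ofReal hcon
  obtain ⟨d, p, q, hd, hpq, rfl, rfl⟩ := Int.exists_coprime_mul hv
  have hv' : p ≠ 0 ∨ q ≠ 0 := by
    by_contra! hc; simp_all
  have hup := hupper p q hv'
  have hk : a * (p : ℝ) ^ 2 + b * p * q + c * (q : ℝ) ^ 2 ≠ 0 := by
    intro h0; rw [h0, abs_zero, mul_zero] at hup; linarith
  have hlow : (t - η) * |a * (p : ℝ) ^ 2 + b * p * q + c * (q : ℝ) ^ 2| < √(b ^ 2 - 4 * a * c) := by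
    refine lt_of_le_of_lt (mul_le_mul_of_nonneg_left ?_ (by linarith)) hPQ
    push_cast
    rw [show a * ((d : ℝ) * p) ^ 2 + b * (d * p) * (d * q) + c * (d * q) ^ 2 =
      d ^ 2 * (a * (p : ℝ) ^ 2 + b * p * q + c * (q : ℝ) ^ 2) by ring, abs_mul]
    refine le_mul_of_one_le_left (abs_nonneg _) ?_
    rw [abs_of_nonneg (by positivity)]
    exact one_le_pow₀ (by exact_mod_cast hd)
  obtain ⟨θ, hθ, r, s, hdet, hform⟩ := exists_reduced_form a b c hpq hk hD
  set k := |a * (p : ℝ) ^ 2 + b * p * q + c * (q : ℝ) ^ 2| with hkdef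
  have hk0 : 0 < k := abs_pos.2 hk
  refine ⟨θ, hθ, √(b ^ 2 - 4 * a * c) / k, ?_, fun X Y hXY _ _ => ?_⟩
  · have h₁ : √(b ^ 2 - 4 * a * c) / k ≤ t := (div_le_iff₀ hk0).2 hup
    have h₂ : t - η < √(b ^ 2 - 4 * a * c) / k := (lt_div_iff₀ hk0).2 hlow
    rw [abs_le]
    constructor <;> linarith
  · have h₁ := hupper _ _ (Int.ne_zero_or_of_det_eq_one hdet hXY)
    rw [hform] at h₁
    refine le_of_mul_le_mul_left ?_ (mul_pos ht0 hk0)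
    have h₂ : t * (1 - η) * k ≤ (t - η) * k := mul_le_mul_of_nonneg_right (by nlinarith) hk0.le
    linarith

open Filter in
theorem exists_isAdmissible_of_mem_lagrangeSpectrum {t : ℝ} (ht : t ∈ LagrangeSpectrum)
    (h2 : 2 ≤ t) : ∃ θ, IsAdmissible θ (θ + t) := by
  obtain ⟨α, hα, htop, hval⟩ := ht
  have ht0 : 0 < t := by linarith
  have hval' : lagrangeVal α = ENNReal.ofReal t := by rw [← hval, ENNReal.ofReal_toReal htop]
  refine IsAdmissible.exists_of_forall_box fun N => ?_
  set η : ℝ := 1 / ((N : ℝ) + 1) with hη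
  have hη0 : 0 < η := by positivity
  have hη1 : η ≤ 1 := by
    rw [hη, div_le_one (by positivity)]; linarith [(Nat.cast_nonneg N : (0 : ℝ) ≤ N)]
  have hdist : ∀ q : ℕ, 0 < q → 0 < (q : ℝ) * distNearestInt (q * α) := by
    intro q hq
    have : Irrational (q * α) := hα.natCast_mul hq.ne'
    exact mul_pos (by exact_mod_cast hq) (abs_pos.2 (sub_ne_zero.2 (this.ne_int _)))
  obtain ⟨Q₀, hQ₀⟩ : ∃ Q₀ : ℕ, ∀ q : ℕ, Q₀ ≤ q → 0 < q →
      1 < (t + η / 2) * (q * distNearestInt (q * α)) := by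
    have : lagrangeVal α < ENNReal.ofReal (t + η / 2) := by
      rw [hval', ENNReal.ofReal_lt_ofReal_iff (by linarith)]; linarith
    obtain ⟨Q₀, h⟩ := eventually_atTop.1 (eventually_lt_of_limsup_lt this)
    refine ⟨Q₀, fun q hq hq0 => ?_⟩
    have := h q hq
    rwa [ENNReal.ofReal_lt_ofReal_iff (by linarith), div_lt_iff₀ (hdist q hq0)] at this
  obtain ⟨c, hc, hcQ⟩ := exists_le_abs_sub_mul hα (Q₀ + 1)
  obtain ⟨R, hR⟩ := exists_nat_gt ((Q₀ + 1 + N) / c)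
  obtain ⟨c', hc', hcR⟩ := exists_le_abs_sub_mul hα (R + Q₀ + 1)
  obtain ⟨M, hM⟩ := exists_nat_gt (1 / c')
  obtain ⟨q', hq'M, hq'⟩ : ∃ q' : ℕ, M + 1 ≤ q' ∧
      (t - η / 2) * (q' * distNearestInt (q' * α)) < 1 := by
    have : ENNReal.ofReal (t - η / 2) < lagrangeVal α := by
      rw [hval', ENNReal.ofReal_lt_ofReal_iff ht0]; linarith
    obtain ⟨q', hq', h⟩ := ((frequently_lt_of_lt_limsup (by isBoundedDefault) this).and_eventually
      (eventually_ge_atTop (M + 1))).exists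
    refine ⟨q', h, ?_⟩
    rwa [ENNReal.ofReal_lt_ofReal_iff_of_nonneg (by linarith), lt_div_iff₀ (hdist q' (by omega))]
      at hq'
  have hlarge : ∀ P Q : ℤ, (Q₀ + 1 : ℕ) ≤ |Q| → 1 ≤ (t + η / 2) * (|Q| * |P - α * Q|) := by
    intro P Q hQ
    have hQ' : Q₀ + 1 ≤ Q.natAbs := by rw [Int.abs_eq_natAbs] at hQ; exact_mod_cast hQ
    refine (hQ₀ Q.natAbs (by omega) (by omega)).le.trans ?_
    have : ((Q.natAbs : ℕ) : ℝ) = |(Q : ℝ)| := by rw [Nat.cast_natAbs, Int.cast_abs]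
    rw [this, Int.cast_abs]
    refine mul_le_mul_of_nonneg_left (mul_le_mul_of_nonneg_left ?_ (abs_nonneg _)) (by linarith)
    rcases abs_choice (Q : ℝ) with h | h <;> rw [h]
    · refine (round_le _ P).trans (le_of_eq ?_)
      rw [abs_sub_comm, mul_comm]
    · refine (round_le _ (-P)).trans (le_of_eq ?_)
      push_cast; congr 1; ring
  obtain ⟨d, p, q, hd, hpq, hp, hq⟩ := Int.exists_coprime_mul
    (p := round (q' * α)) (q := q') (Or.inr (by omega))
  have hdR : (1 : ℝ) ≤ d := by exact_mod_cast hd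
  have hpR : ((round (q' * α) : ℤ) : ℝ) = d * p := by exact_mod_cast hp
  have hqR : (q' : ℝ) = d * q := by exact_mod_cast hq
  have hq0 : 0 < q := by
    refine pos_of_mul_pos_right (a := d) ?_ (by omega)
    omega
  have hq1 : (1 : ℝ) ≤ q := by exact_mod_cast hq0
  have hq'0 : (0 : ℝ) < q' := by rw [hqR]; positivity
  have hdq : distNearestInt (q' * α) = d * |p - α * q| := by
    rw [distNearestInt, hpR, hqR, abs_sub_comm, ← abs_of_pos (by linarith : (0 : ℝ) < d), ← abs_mul,
      abs_of_pos (by linarith : (0 : ℝ) < d)]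
    congr 1; ring
  set e := |p - α * q| with he
  have he0 : 0 ≤ e := abs_nonneg _
  have hk1 : (t - η / 2) * (q * e) < 1 := by
    refine lt_of_le_of_lt (mul_le_mul_of_nonneg_left ?_ (by linarith)) hq'
    rw [hdq, hqR, show (d * q * (d * e) : ℝ) = d ^ 2 * (q * e) by ring]
    exact le_mul_of_one_le_left (by positivity) (one_le_pow₀ hdR)
  have he1 : e ≤ 1 := by
    have := le_mul_of_one_le_left he0 hq1
    nlinarith
  have hqR' : (R + Q₀ + 1 : ℕ) ≤ |q| := by
    by_contra! hcon
    have h1 := hcR p q (Or.inr hq0.ne') hcon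
    have h2 : (q' : ℝ) * (d * e) < 1 := by
      rw [hdq] at hq'
      have : 0 ≤ (q' : ℝ) * (d * e) := by positivity
      nlinarith
    have h3 : 1 < q' * c' := by
      have h4 : (M : ℝ) + 1 ≤ q' := by exact_mod_cast hq'M
      rw [div_lt_iff₀ hc'] at hM
      nlinarith
    have h5 : e ≤ d * e := le_mul_of_one_le_left he0 hdR
    nlinarith [mul_le_mul_of_nonneg_left (h1.trans h5) hq'0.le]
  rw [abs_of_pos hq0] at hqR'
  have hlow := hlarge p q (by rw [abs_of_pos hq0]; push_cast at hqR' ⊢; omega)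
  rw [abs_of_pos hq0] at hlow
  have hkabs : |(0 : ℝ) * p ^ 2 + 1 * p * q + -α * q ^ 2| = q * e := by
    rw [he, ← abs_of_pos (by linarith : (0 : ℝ) < q), ← abs_mul,
      abs_of_pos (by linarith : (0 : ℝ) < q)]
    congr 1; ring
  have hk0 : 0 < q * e := by
    by_contra! hcon
    nlinarith
  obtain ⟨θ, hθ, r, s, hdet, hform⟩ := exists_reduced_form 0 1 (-α) hpq
    (by rw [← abs_pos, hkabs]; exact hk0) (by norm_num)
  simp only [hkabs] at hform
  rw [show √((1 : ℝ) ^ 2 - 4 * 0 * -α) = 1 by norm_num] at hform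
  refine ⟨θ, hθ, 1 / (q * e), ?_, fun X Y hXY _ hY => ?_⟩
  · have h₁ : 1 / (q * e) ≤ t + η / 2 := (div_le_iff₀ hk0).2 hlow
    have h₂ : t - η / 2 < 1 / (q * e) := (lt_div_iff₀ hk0).2 hk1
    rw [abs_le]
    constructor <;> linarith
  have hv := Int.ne_zero_or_of_det_eq_one hdet hXY
  specialize hform X Y
  have hPQ : p * (q * X + s * Y) - q * (p * X + r * Y) = Y := by linear_combination Y * hdet
  set P := p * X + r * Y
  set Q := q * X + s * Y
  rcases lt_or_ge |Q| (Q₀ + 1 : ℕ) with hQ | hQ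
  · exfalso
    have h₁ := hcQ P Q hv hQ
    have h₂ : q * |P - α * Q| ≤ |(Q : ℝ)| * e + |(Y : ℝ)| := by
      have hPQ' : (p * Q - q * P : ℝ) = Y := by exact_mod_cast hPQ
      rw [he, ← abs_mul, ← abs_of_pos (by linarith : (0 : ℝ) < q), ← abs_mul,
        abs_of_pos (by linarith : (0 : ℝ) < q)]
      refine le_trans (le_of_eq ?_) (abs_sub _ _)
      congr 1; linear_combination -hPQ'
    have h₃ : |(Q : ℝ)| ≤ Q₀ + 1 := by exact_mod_cast hQ.le
    have h₄ : |(Y : ℝ)| ≤ N := by exact_mod_cast hY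
    have h₅ : (R : ℝ) ≤ q := by
      have : (R : ℤ) ≤ q := by push_cast at hqR'; omega
      exact_mod_cast this
    rw [div_lt_iff₀ hc] at hR
    have h₆ := mul_le_mul h₃ he1 he0 (by positivity)
    have h₇ := mul_le_mul h₅ h₁ hc.le (by linarith)
    linarith
  · have h₁ := hlarge P Q hQ
    have h₂ : |(0 : ℝ) * P ^ 2 + 1 * P * Q + -α * Q ^ 2| = |(Q : ℝ)| * |P - α * Q| := by
      rw [← abs_mul]; congr 1; ring
    rw [Int.cast_abs, ← h₂, hform] at h₁
    refine le_of_mul_le_mul_left ?_ (mul_pos (by linarith : 0 < t + η / 2) hk0)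
    have h₃ : (t + η / 2) * (1 - η) * (q * e) ≤ (t - η / 2) * (q * e) :=
      mul_le_mul_of_nonneg_right (by nlinarith) hk0.le
    linarith

namespace IsAdmissible

variable {θ t : ℝ}

theorem mem_markovSpectrum (h : IsAdmissible θ (θ + t)) (ht : 0 < t) : t ∈ MarkovSpectrum := by
  have hD : (-(2 * θ + t)) ^ 2 - 4 * 1 * (θ * (θ + t)) = t ^ 2 := by ring
  have hF : ∀ p q : ℝ, 1 * p ^ 2 + -(2 * θ + t) * p * q + θ * (θ + t) * q ^ 2 =
      (p - θ * q) * (p - (θ + t) * q) := by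
    intro p q; ring
  have hval : markovVal 1 (-(2 * θ + t)) (θ * (θ + t)) = ENNReal.ofReal t := by
    simp only [markovVal, hD, hF, Real.sqrt_sq ht.le]
    apply le_antisymm
    · refine iSup₂_le fun ⟨p, q⟩ hpq => ENNReal.div_le_of_le_mul ?_
      have hpq' : p ≠ 0 ∨ q ≠ 0 := by
        simp only [ne_eq, Prod.mk.injEq] at hpq; tauto
      rw [← ENNReal.ofReal_mul ht.le]
      exact ENNReal.ofReal_le_ofReal (le_mul_of_one_le_right ht.le (h p q hpq'))
    · refine le_iSup₂_of_le (1, 0) (by simp) ?_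
      simp
  refine ⟨1, -(2 * θ + t), θ * (θ + t), by rw [hD]; positivity, ?_, ?_⟩
  · rw [hval]; exact ENNReal.ofReal_ne_top
  · rw [hval, ENNReal.toReal_ofReal ht.le]

theorem irrational {φ : ℝ} (h : IsAdmissible θ φ) : Irrational φ := by
  rintro ⟨r, hr⟩
  refine h.mul_ne r.num (q := r.den) (by exact_mod_cast r.den_ne_zero) ?_
  rw [← hr]
  exact_mod_cast Rat.mul_den_eq_num r

open Filter Topology in
theorem lagrangeVal_le (h : IsAdmissible θ (θ + t)) (ht : 0 < t) :
    lagrangeVal (θ + t) ≤ ENNReal.ofReal t := by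
  have hlim : Tendsto (fun q : ℕ => ENNReal.ofReal (t + 1 / q)) atTop (𝓝 (ENNReal.ofReal t)) := by
    refine ENNReal.tendsto_ofReal ?_
    simpa using (tendsto_one_div_atTop_nhds_zero_nat (𝕜 := ℝ)).const_add t
  rw [← hlim.limsup_eq]
  refine limsup_le_limsup ?_
  filter_upwards [eventually_gt_atTop 0] with q hq
  have hq0 : (0 : ℝ) < q := by exact_mod_cast hq
  refine ENNReal.ofReal_le_ofReal ?_
  set p := round (q * (θ + t)) with hp
  have hd : distNearestInt (q * (θ + t)) = |p - (θ + t) * q| := by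
    rw [distNearestInt, ← hp, abs_sub_comm, mul_comm]
  have hd2 : |p - (θ + t) * q| ≤ 1 / 2 := by
    rw [← hd]; exact abs_sub_round _
  have hF := h p q (Or.inr (by exact_mod_cast hq.ne'))
  rw [Int.cast_natCast, abs_mul] at hF
  have h1 : |p - θ * q| ≤ |p - (θ + t) * q| + t * q := by
    rw [← abs_of_pos (mul_pos ht hq0)]
    refine le_trans (le_of_eq ?_) (abs_add_le _ _)
    congr 1; ring
  rw [hd]
  set d := |p - (θ + t) * q|
  have hd0 : 0 < d := by
    by_contra! hc
    have : 0 ≤ |p - θ * q| := abs_nonneg _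
    nlinarith
  rw [div_le_iff₀ (mul_pos hq0 hd0)]
  have h2 : (t + 1 / q) * (q * d) = (t * q + 1) * d := by field_simp
  rw [h2]
  nlinarith

theorem le_lagrangeVal (ht : 0 < t)
    (H : ∀ N : ℕ, ∃ p q : ℤ, N ≤ q ∧ 0 < q ∧ θ * q < p ∧ (p - θ * q) * (p - (θ + t) * q) = 1)
    (hirr : Irrational (θ + t)) : ENNReal.ofReal t ≤ lagrangeVal (θ + t) := by
  refine Filter.le_limsup_of_frequently_le (Filter.frequently_atTop.2 fun N => ?_)
    (by isBoundedDefault)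
  obtain ⟨p, q, hNq, hq, hθ, hF⟩ := H N
  obtain ⟨q, rfl⟩ := Int.eq_ofNat_of_zero_le hq.le
  refine ⟨q, by exact_mod_cast hNq, ENNReal.ofReal_le_ofReal ?_⟩
  have hq' : q ≠ 0 := by omega
  have hq0 : (0 : ℝ) < q := by exact_mod_cast hq
  simp only [Int.cast_natCast] at hF hθ
  have hpos : 0 < p - (θ + t) * q := by
    have h1 : 0 < p - θ * q := sub_pos.2 hθ
    by_contra! hc
    nlinarith
  have hdist : distNearestInt (q * (θ + t)) ≤ p - (θ + t) * q := by
    refine (round_le _ p).trans (le_of_eq ?_)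
    rw [abs_sub_comm, mul_comm, abs_of_pos hpos]
  have hdpos : 0 < distNearestInt (q * (θ + t)) :=
    abs_pos.2 (sub_ne_zero.2 ((hirr.natCast_mul hq').ne_int _))
  rw [le_div_iff₀ (mul_pos hq0 hdpos)]
  have h2 := mul_le_mul_of_nonneg_left hdist (mul_pos ht hq0).le
  nlinarith [mul_pos hpos hpos]

end IsAdmissible

theorem exists_markov_pell (m : ℤ) (hm : 0 < m) (n : ℕ) :
    ∃ a b : ℤ, 0 ≤ a ∧ a < b ∧ n ≤ b ∧ a ^ 2 - 3 * m * a * b + b ^ 2 = 1 := by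
  induction n with
  | zero => exact ⟨0, 1, by norm_num⟩
  | succ n ih =>
    obtain ⟨a, b, ha, hab, hn, h⟩ := ih
    have : 3 * b ≤ 3 * m * b := by nlinarith
    refine ⟨b, 3 * m * b - a, by omega, by omega, by push_cast; omega, ?_⟩
    linear_combination h

namespace MarkovFan

variable {p₁ x p₂ y p₃ m z : ℤ}

theorem exists_isAdmissible (h : MarkovFan p₁ x p₂ y p₃ m z) {t : ℝ} (ht0 : 0 < t)
    (ht : t ^ 2 = 9 - 4 / (m : ℝ) ^ 2) : ∃ θ : ℝ, IsAdmissible θ (θ + t) ∧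
      ∀ N : ℕ, ∃ p q : ℤ, N ≤ q ∧ 0 < q ∧ θ * q < p ∧ (p - θ * q) * (p - (θ + t) * q) = 1 := by
  have hm := h.m_pos
  have hmR : (0 : ℝ) < m := by exact_mod_cast hm
  have hm1 : (1 : ℝ) ≤ m := by exact_mod_cast hm
  have ht' : t ^ 2 * m ^ 2 = 9 * m ^ 2 - 4 := by rw [ht]; field_simp
  have hF : ∀ p q : ℤ, (p - (p₃ / m - (3 + t) / 2) * q) * (p - (p₃ / m - (3 + t) / 2 + t) * q) =
      (scaledMarkovForm p₃ m p q : ℝ) / m ^ 2 := by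
    intro p q
    rw [eq_div_iff (by positivity), scaledMarkovForm]
    push_cast
    field_simp
    linear_combination (-q ^ 2 : ℝ) * ht'
  refine ⟨p₃ / m - (3 + t) / 2, fun p q hv => ?_, fun N => ?_⟩
  · rw [hF, abs_div, abs_of_pos (by positivity : (0 : ℝ) < m ^ 2), one_le_div (by positivity)]
    exact_mod_cast h.le_abs_scaledMarkovForm p q hv
  · obtain ⟨a, b, ha, hab, hN, hP⟩ := exists_markov_pell m hm N
    have hab' : (a : ℝ) < b := by exact_mod_cast hab
    have ha' : (0 : ℝ) ≤ a := by exact_mod_cast ha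
    refine ⟨-a + p₃ * b, m * b, by nlinarith, by nlinarith, ?_, ?_⟩
    · push_cast
      have : (p₃ / m - (3 + t) / 2) * (m * b : ℝ) = p₃ * b - (3 + t) / 2 * (m * b) := by
        field_simp
      rw [this]
      have h1 : (b : ℝ) ≤ m * b := le_mul_of_one_le_left (by linarith) hm1
      nlinarith
    · rw [hF, div_eq_one_iff_eq (by positivity), scaledMarkovForm]
      have hP' : (a ^ 2 - 3 * m * a * b + b ^ 2 : ℝ) = 1 := by exact_mod_cast hP
      push_cast
      linear_combination (m : ℝ) ^ 2 * hP'

end MarkovFan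

theorem exists_markovFan_of_isMarkovNumber {n : ℕ} (hn : IsMarkovNumber n) :
    ∃ p₁ x p₂ y p₃ z, MarkovFan p₁ x p₂ y p₃ n z := by
  obtain ⟨x, y, ⟨hx, hy, -, h⟩, hxn, hyn⟩ := hn
  obtain ⟨p₁, p₂, p₃, z, hf⟩ := MarkovFan.exists_of_markov_eq n x y n (by omega) (by omega)
    (by omega) (by omega) le_rfl (by exact_mod_cast h)
  exact ⟨p₁, x, p₂, y, p₃, z, hf⟩

theorem MarkovFan.isMarkovNumber {p₁ x p₂ y p₃ m z : ℤ} (h : MarkovFan p₁ x p₂ y p₃ m z) :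
    IsMarkovNumber m.toNat := by
  have hx := h.x_pos
  have hy := h.y_pos
  have hxm := h.x_le
  have hym := h.y_le
  refine ⟨x.toNat, y.toNat, ⟨by omega, by omega, by omega, ?_⟩, by omega, by omega⟩
  zify
  rw [Int.toNat_of_nonneg hx.le, Int.toNat_of_nonneg hy.le, Int.toNat_of_nonneg h.m_pos.le]
  exact h.markov_eq

theorem IsAdmissible.exists_isMarkovNumber {θ t : ℝ} (h : IsAdmissible θ (θ + t))
    (ht : t ∈ Set.Ico √5 3) :
    ∃ z : ℕ, IsMarkovNumber z ∧ t = √(9 - 4 / (z : ℝ) ^ 2) := by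
  have h2 : 2 ≤ t := le_trans (Real.le_sqrt_of_sq_le (by norm_num)) ht.1
  obtain ⟨_, _, _, _, _, m, _, hf, hsq⟩ := h.exists_markovFan (by linarith) (by linarith [ht.2])
  refine ⟨m.toNat, hf.isMarkovNumber, ?_⟩
  have hm : ((m.toNat : ℕ) : ℝ) = m := by
    exact_mod_cast Int.toNat_of_nonneg hf.m_pos.le
  rw [hm, ← hsq, add_sub_cancel_left, Real.sqrt_sq (by linarith)]

theorem IsMarkovNumber.mem_spectra {n : ℕ} (hn : IsMarkovNumber n) :
    √(9 - 4 / (n : ℝ) ^ 2) ∈ Set.Ico √5 3 ∧ √(9 - 4 / (n : ℝ) ^ 2) ∈ LagrangeSpectrum ∧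
      √(9 - 4 / (n : ℝ) ^ 2) ∈ MarkovSpectrum := by
  obtain ⟨p₁, x, p₂, y, p₃, z, h⟩ := exists_markovFan_of_isMarkovNumber hn
  have hn1 : (1 : ℝ) ≤ n := by exact_mod_cast h.m_pos
  have hpos : 0 < 4 / (n : ℝ) ^ 2 := by positivity
  have hle : 4 / (n : ℝ) ^ 2 ≤ 4 := div_le_self (by norm_num) (one_le_pow₀ hn1)
  have ht0 : 0 < √(9 - 4 / (n : ℝ) ^ 2) := Real.sqrt_pos.2 (by linarith)
  have ht3 : √(9 - 4 / (n : ℝ) ^ 2) < 3 := by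
    rw [Real.sqrt_lt' (by norm_num)]; linarith
  obtain ⟨θ, hadm, hattained⟩ := h.exists_isAdmissible ht0
    (by rw [Real.sq_sqrt (by linarith), Int.cast_natCast])
  have hL := le_antisymm (hadm.lagrangeVal_le ht0)
    (IsAdmissible.le_lagrangeVal ht0 hattained hadm.irrational)
  refine ⟨⟨Real.sqrt_le_sqrt (by linarith), ht3⟩, ⟨_, hadm.irrational, ?_, ?_⟩,
    hadm.mem_markovSpectrum ht0⟩
  · rw [hL]; exact ENNReal.ofReal_ne_top
  · rw [hL, ENNReal.toReal_ofReal ht0.le]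

/-- **Markov's theorem**: `L ∩ [√5, 3) = M ∩ [√5, 3) = {√(9 - 4/z²) : z a Markov number}`. -/
theorem markov_theorem :
    LagrangeSpectrum ∩ Set.Ico (Real.sqrt 5) 3 = MarkovSpectrum ∩ Set.Ico (Real.sqrt 5) 3 ∧
    MarkovSpectrum ∩ Set.Ico (Real.sqrt 5) 3 =
      {t : ℝ | ∃ z : ℕ, IsMarkovNumber z ∧ t = Real.sqrt (9 - 4 / (z : ℝ) ^ 2)} := by
  have hsqrt : (2 : ℝ) ≤ √5 := Real.le_sqrt_of_sq_le (by norm_num)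
  have hL : LagrangeSpectrum ∩ Set.Ico (Real.sqrt 5) 3 =
      {t : ℝ | ∃ z : ℕ, IsMarkovNumber z ∧ t = Real.sqrt (9 - 4 / (z : ℝ) ^ 2)} := by
    refine Set.Subset.antisymm (fun t ⟨ht, hI⟩ => ?_) ?_
    · obtain ⟨θ, h⟩ := exists_isAdmissible_of_mem_lagrangeSpectrum ht (hsqrt.trans hI.1)
      exact h.exists_isMarkovNumber hI
    · rintro _ ⟨z, hz, rfl⟩
      exact ⟨hz.mem_spectra.2.1, hz.mem_spectra.1⟩
  have hM : MarkovSpectrum ∩ Set.Ico (Real.sqrt 5) 3 =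
      {t : ℝ | ∃ z : ℕ, IsMarkovNumber z ∧ t = Real.sqrt (9 - 4 / (z : ℝ) ^ 2)} := by
    refine Set.Subset.antisymm (fun t ⟨ht, hI⟩ => ?_) ?_
    · obtain ⟨θ, h⟩ := exists_isAdmissible_of_mem_markovSpectrum ht (by linarith [hI.1])
      exact h.exists_isMarkovNumber hI
    · rintro _ ⟨z, hz, rfl⟩
      exact ⟨hz.mem_spectra.2.2, hz.mem_spectra.1⟩
  exact ⟨hL.trans hM.symm, hM⟩
end

section
/- (Hall's ray) Every real number t ≥ 6 belongs to the Lagrange spectrum L; that is, for every t ≥ 6 there exists an irrational α with ℓ(α) = t, so [6, ∞) ⊆ L. -/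
open scoped ENNReal

/-- Hall's dissection argument for the sum of two Cantor sets: as long as both dissections have
gaps no longer than the remaining pieces, the number `s` can be followed down to cells with
arbitrarily small gaps. -/
theorem exists_small_cells {Cell : ℝ → ℝ → ℝ → ℝ → Prop}
    (hCell : ∀ a g h b, Cell a g h b → 0 < h - g ∧ h - g ≤ g - a ∧ h - g ≤ b - h ∧
      (∃ g' h', Cell a g' h' g ∧ h' - g' ≤ h - g) ∧ (∃ g' h', Cell h g' h' b ∧ h' - g' ≤ h - g))
    {ε : ℝ} (s : ℝ) (n : ℕ) :
    ∀ a g h b a' g' h' b', Cell a g h b → Cell a' g' h' b' → h - g ≤ b' - a' → h' - g' ≤ b - a →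
      a + a' ≤ s → s ≤ b + b' → (b - a) + (b' - a') ≤ n * ε →
      ∃ a g h b a' g' h' b', Cell a g h b ∧ Cell a' g' h' b' ∧ a + a' ≤ s ∧ s ≤ b + b' ∧
        h - g < ε ∧ h' - g' < ε := by
  induction n with
  | zero =>
    intro a g h b a' g' h' b' c c' _ _ _ _ hn
    obtain ⟨p, l, r, -⟩ := hCell _ _ _ _ c
    obtain ⟨p', l', r', -⟩ := hCell _ _ _ _ c'
    norm_num at hn
    linarith
  | succ n ih =>
    intro a g h b a' g' h' b' c c' h1 h2 hs1 hs2 hn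
    obtain ⟨p, l, r, ⟨u, v, cl, hl⟩, ⟨u₂, v₂, cr, hr⟩⟩ := hCell _ _ _ _ c
    obtain ⟨p', l', r', ⟨u', v', cl', hl'⟩, ⟨u₂', v₂', cr', hr'⟩⟩ := hCell _ _ _ _ c'
    push_cast at hn
    by_cases hε : h - g < ε ∧ h' - g' < ε
    · exact ⟨a, g, h, b, a', g', h', b', c, c', hs1, hs2, hε.1, hε.2⟩
    rcases le_total (h' - g') (h - g) with hle | hle
    · have : ε ≤ h - g := by
        by_contra! hc
        exact hε ⟨hc, hle.trans_lt hc⟩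
      rcases le_total s (g + b') with hs | hs
      · exact ih _ _ _ _ _ _ _ _ cl c' (by linarith) (by linarith) hs1 hs (by linarith)
      · exact ih _ _ _ _ _ _ _ _ cr c' (by linarith) (by linarith) (by linarith) hs2
          (by linarith)
    · have : ε ≤ h' - g' := by
        by_contra! hc
        exact hε ⟨hle.trans_lt hc, hc⟩
      rcases le_total s (b + g') with hs | hs
      · exact ih _ _ _ _ _ _ _ _ c cl' (by linarith) (by linarith) hs1 hs (by linarith)
      · exact ih _ _ _ _ _ _ _ _ c cr' (by linarith) (by linarith) (by linarith) hs2
          (by linarith)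

/-- Sequences of partial quotients in `{1, 2, 3, 4}` together with the values of all the tails of
the corresponding continued fraction. -/
def boundedExpansions : Set ((ℕ → ℕ) × (ℕ → ℝ)) :=
  {p | ∀ n, p.1 n ∈ Set.Icc 1 4 ∧ p.2 n ∈ Set.Icc (0 : ℝ) 1 ∧ p.2 n * (p.1 n + p.2 (n + 1)) = 1}

/-- Hall's set `F(4)` of continued fractions `[0; b₀, b₁, …]` with `1 ≤ bᵢ ≤ 4`. -/
def hallSet : Set ℝ := (fun p : (ℕ → ℕ) × (ℕ → ℝ) => p.2 0) '' boundedExpansions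

theorem isCompact_boundedExpansions : IsCompact boundedExpansions := by
  have hK : IsCompact ((Set.univ.pi fun _ : ℕ => Set.Icc 1 4) ×ˢ
      (Set.univ.pi fun _ : ℕ => Set.Icc (0 : ℝ) 1) : Set ((ℕ → ℕ) × (ℕ → ℝ))) :=
    (isCompact_univ_pi fun _ => (Set.finite_Icc _ _).isCompact).prod
      (isCompact_univ_pi fun _ => isCompact_Icc)
  refine hK.of_isClosed_subset ?_ ?_
  · simp only [boundedExpansions, Set.ofPred_forall, Set.ofPred_and]
    refine isClosed_iInter fun n => IsClosed.inter ?_ (IsClosed.inter ?_ ?_)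
    · exact (isClosed_discrete (Set.Icc 1 4)).preimage
        (f := fun p : (ℕ → ℕ) × (ℕ → ℝ) => p.1 n) (by fun_prop)
    · exact isClosed_Icc.preimage (f := fun p : (ℕ → ℕ) × (ℕ → ℝ) => p.2 n) (by fun_prop)
    · refine isClosed_eq ?_ continuous_const
      have : Continuous fun p : (ℕ → ℕ) × (ℕ → ℝ) => ((p.1 n : ℕ) : ℝ) :=
        (continuous_of_discreteTopology (f := fun k : ℕ => (k : ℝ))).comp
          (by fun_prop : Continuous fun p : (ℕ → ℕ) × (ℕ → ℝ) => p.1 n)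
      fun_prop
  · intro p hp
    simp only [Set.mem_prod, Set.mem_pi, Set.mem_univ, true_implies]
    exact ⟨fun n => (hp n).1, fun n => (hp n).2.1⟩

theorem isCompact_hallSet : IsCompact hallSet :=
  isCompact_boundedExpansions.image (by fun_prop)

theorem inv_add_mem_hallSet {d : ℕ} (hd : d ∈ Set.Icc 1 4) {x : ℝ} (hx : x ∈ hallSet) :
    1 / (d + x) ∈ hallSet := by
  obtain ⟨⟨b, X⟩, hp, rfl⟩ := hx
  have h1 : (1 : ℝ) ≤ d := by exact_mod_cast hd.1
  have h0 : 0 ≤ X 0 := (hp 0).2.1.1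
  have hpos : 0 < d + X 0 := by linarith
  refine ⟨⟨fun | 0 => d | n + 1 => b n, fun | 0 => 1 / (d + X 0) | n + 1 => X n⟩, ?_, rfl⟩
  rintro (_ | n)
  · refine ⟨hd, ⟨by positivity, ?_⟩, ?_⟩
    · exact (div_le_one hpos).2 (by linarith)
    · change 1 / (d + X 0) * (d + X 0) = 1
      field_simp
  · exact hp n

/-- The least element `[0; 4, 1, 4, 1, …]` of `hallSet`. -/
noncomputable def hallMin : ℝ := (√2 - 1) / 2

/-- The greatest element `[0; 1, 4, 1, 4, …]` of `hallSet`. -/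
noncomputable def hallMax : ℝ := 2 * (√2 - 1)

theorem hallMin_mul : hallMin * (4 + hallMax) = 1 := by
  have := Real.sq_sqrt (show (0 : ℝ) ≤ 2 by norm_num)
  unfold hallMin hallMax
  nlinarith

theorem hallMax_mul : hallMax * (1 + hallMin) = 1 := by
  have := Real.sq_sqrt (show (0 : ℝ) ≤ 2 by norm_num)
  unfold hallMin hallMax
  nlinarith

theorem hallMin_mem_Icc : hallMin ∈ Set.Icc (0.2071 : ℝ) 0.2072 := by
  have h1 : (1.4142 : ℝ) ≤ √2 := Real.le_sqrt_of_sq_le (by norm_num)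
  have h2 : √2 ≤ (1.4144 : ℝ) := Real.sqrt_le_iff.2 (by norm_num)
  unfold hallMin
  constructor <;> linarith

theorem hallMax_mem_Icc : hallMax ∈ Set.Icc (0.8284 : ℝ) 0.8288 := by
  have h1 : (1.4142 : ℝ) ≤ √2 := Real.le_sqrt_of_sq_le (by norm_num)
  have h2 : √2 ≤ (1.4144 : ℝ) := Real.sqrt_le_iff.2 (by norm_num)
  unfold hallMax
  constructor <;> linarith

theorem hallMin_mem_hallSet : hallMin ∈ hallSet := by
  obtain ⟨h1, h2⟩ := hallMin_mem_Icc
  obtain ⟨h3, h4⟩ := hallMax_mem_Icc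
  refine ⟨⟨fun n => if Even n then 4 else 1, fun n => if Even n then hallMin else hallMax⟩,
    fun n => ?_, by simp⟩
  by_cases hn : Even n
  · have hn' : ¬ Even (n + 1) := by simpa [Nat.even_add_one] using hn
    simp only [hn, hn', if_true, if_false]
    refine ⟨by simp, ⟨by linarith, by linarith⟩, ?_⟩
    exact_mod_cast hallMin_mul
  · have hn' : Even (n + 1) := by simpa [Nat.even_add_one] using hn
    simp only [hn, hn', if_true, if_false]
    refine ⟨by simp, ⟨by linarith, by linarith⟩, ?_⟩
    exact_mod_cast hallMax_mul

/-- `f` is a composition of maps `x ↦ 1 / (d + x)` with `1 ≤ d ≤ 4`, that is a Möbius map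
of determinant `σ = ± 1` with denominator `q + q' x`. -/
structure IsBranch (f : ℝ → ℝ) (σ q q' : ℝ) : Prop where
  maps : ∀ x ∈ hallSet, f x ∈ hallSet
  sign : σ = 1 ∨ σ = -1
  pos : 0 < q
  nonneg : 0 ≤ q'
  le : q' ≤ q
  sub : ∀ x y, 0 ≤ x → 0 ≤ y → f x - f y = σ * ((x - y) / ((q + q' * x) * (q + q' * y)))

theorem isBranch_id : IsBranch (fun x => x) 1 1 0 where
  maps _ hx := hx
  sign := Or.inl rfl
  pos := one_pos
  nonneg := le_rfl
  le := zero_le_one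
  sub x y _ _ := by simp

theorem IsBranch.comp_inv {f : ℝ → ℝ} {σ q q' : ℝ} (hf : IsBranch f σ q q') {d : ℕ}
    (hd : d ∈ Set.Icc 1 4) : IsBranch (fun x => f (1 / (d + x))) (-σ) (q * d + q') q := by
  have h1 : (1 : ℝ) ≤ d := by exact_mod_cast hd.1
  have hq := hf.pos
  have hq' := hf.nonneg
  refine ⟨fun x hx => hf.maps _ (inv_add_mem_hallSet hd hx), ?_, by positivity, hq.le, by nlinarith,
    fun x y hx hy => ?_⟩
  · rcases hf.sign with h | h <;> simp [h]
  · have hx' : 0 < d + x := by linarith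
    have hy' : 0 < d + y := by linarith
    rw [hf.sub _ _ (by positivity) (by positivity)]
    have e1 : q + q' * (1 / (d + x)) = (q * d + q' + q * x) / (d + x) := by field_simp; ring
    have e2 : q + q' * (1 / (d + y)) = (q * d + q' + q * y) / (d + y) := by field_simp; ring
    have p1 : 0 < q * d + q' + q * x := by positivity
    have p2 : 0 < q * d + q' + q * y := by positivity
    rw [e1, e2]
    field_simp
    ring

/-- Comparison of the lengths of the images of two intervals under a Möbius map of bounded
distortion. -/
theorem mobius_length_le {q q' u v u' v' r₁ r₂ C : ℝ} (hq : 0 < q) (hq' : 0 ≤ q') (hle : q' ≤ q)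
    (hu : 0 ≤ u) (hv : 0 ≤ v) (hu' : 0 ≤ u') (hv' : 0 ≤ v') (hr₁ : 1 ≤ r₁) (hr₂ : 1 ≤ r₂)
    (huv : u ≤ v) (h₁ : 1 + v' ≤ r₁ * (1 + v)) (h₂ : 1 + u' ≤ r₂ * (1 + u))
    (h : (v - u) * (r₁ * r₂) ≤ C * (v' - u')) :
    (v - u) / ((q + q' * v) * (q + q' * u)) ≤ C * ((v' - u') / ((q + q' * v') * (q + q' * u'))) := by
  have key : ∀ {x y r : ℝ}, 1 ≤ r → 1 + x ≤ r * (1 + y) → q + q' * x ≤ r * (q + q' * y) := by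
    intro x y r hr hxy
    nlinarith [mul_nonneg (sub_nonneg.2 hle) (sub_nonneg.2 hr),
      mul_nonneg hq' (sub_nonneg.2 hxy)]
  have k₁ := key hr₁ h₁
  have k₂ := key hr₂ h₂
  have pu : 0 < q + q' * u := by positivity
  have pv : 0 < q + q' * v := by positivity
  have pu' : 0 < q + q' * u' := by positivity
  have pv' : 0 < q + q' * v' := by positivity
  rw [← mul_div_assoc, div_le_div_iff₀ (by positivity) (by positivity)]
  calc (v - u) * ((q + q' * v') * (q + q' * u'))
      ≤ (v - u) * ((r₁ * (q + q' * v)) * (r₂ * (q + q' * u))) := by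
        have := sub_nonneg.2 huv
        gcongr
    _ = (v - u) * (r₁ * r₂) * ((q + q' * v) * (q + q' * u)) := by ring
    _ ≤ _ := by gcongr

theorem inv_add_mem_Icc {k x l u L U : ℝ} (hx : x ∈ Set.Icc l u) (hk : 0 < k + l)
    (hL : 0 ≤ L) (hU : 0 ≤ U) (h₁ : L * (k + u) ≤ 1) (h₂ : 1 ≤ U * (k + l)) :
    1 / (k + x) ∈ Set.Icc L U := by
  obtain ⟨hl, hu⟩ := hx
  have : 0 < k + x := by linarith
  refine ⟨(le_div_iff₀ this).2 ?_, (div_le_iff₀ this).2 ?_⟩ <;> nlinarith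

/-- The left end of the gap separating the digits `> k` from the digit `k`, that is the greatest
element of `hallSet` with first digit `k + 1`. -/
noncomputable def cutLo (k : ℕ) : ℝ := 1 / ((k + 1 : ℕ) + hallMin)

/-- The right end of the gap separating the digits `> k` from the digit `k`, that is the least
element of `hallSet` with first digit `k`. -/
noncomputable def cutHi (k : ℕ) : ℝ := 1 / (k + hallMax)

theorem cutLo_zero : cutLo 0 = hallMax := by
  have := hallMax_mul
  have h := hallMin_mem_Icc.1
  unfold cutLo
  rw [div_eq_iff (by push_cast; linarith)]
  push_cast
  linarith

theorem cutHi_four : cutHi 4 = hallMin := by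
  have := hallMin_mul
  have h := hallMax_mem_Icc.1
  unfold cutHi
  rw [div_eq_iff (by push_cast; linarith)]
  push_cast
  linarith

theorem cutLo_one_mem : cutLo 1 ∈ Set.Icc (0.453 : ℝ) 0.4532 :=
  inv_add_mem_Icc hallMin_mem_Icc (by norm_num) (by norm_num) (by norm_num) (by norm_num)
    (by norm_num)

theorem cutLo_two_mem : cutLo 2 ∈ Set.Icc (0.3117 : ℝ) 0.3119 :=
  inv_add_mem_Icc hallMin_mem_Icc (by norm_num) (by norm_num) (by norm_num) (by norm_num)
    (by norm_num)

theorem cutLo_three_mem : cutLo 3 ∈ Set.Icc (0.2376 : ℝ) 0.2378 :=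
  inv_add_mem_Icc hallMin_mem_Icc (by norm_num) (by norm_num) (by norm_num) (by norm_num)
    (by norm_num)

theorem cutHi_one_mem : cutHi 1 ∈ Set.Icc (0.5467 : ℝ) 0.547 :=
  inv_add_mem_Icc hallMax_mem_Icc (by norm_num) (by norm_num) (by norm_num) (by norm_num)
    (by norm_num)

theorem cutHi_two_mem : cutHi 2 ∈ Set.Icc (0.3535 : ℝ) 0.3537 :=
  inv_add_mem_Icc hallMax_mem_Icc (by norm_num) (by norm_num) (by norm_num) (by norm_num)
    (by norm_num)

theorem cutHi_three_mem : cutHi 3 ∈ Set.Icc (0.2611 : ℝ) 0.2613 :=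
  inv_add_mem_Icc hallMax_mem_Icc (by norm_num) (by norm_num) (by norm_num) (by norm_num)
    (by norm_num)

/-- The inequalities between the dividing points that make the dissection work: `g, h` bound the
gap of the parent cell with end points `A, b`, and `u, v` the gap of one of its two children. -/
structure GoodGap (A g h b u v : ℝ) : Prop where
  nonneg : 0 ≤ A
  gap_pos : g < h
  left : h - g ≤ g - A
  right : (h - g) * 1.69 ≤ b - h
  total : (b - A) * 1.69 ≤ 20 * (h - g)
  distortion : 1 + b ≤ 1.3 * (1 + g)
  distortion' : 1 + g ≤ 1.3 * (1 + A)
  child_nonneg : 0 ≤ u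
  child_le : u ≤ v
  child : (v - u) * 1.44 ≤ h - g
  child_distortion : 1 + h ≤ 1.2 * (1 + v)
  child_distortion' : 1 + g ≤ 1.2 * (1 + u)

theorem goodGap_right {k : ℕ} (hk : k ∈ Set.Icc 1 3) :
    GoodGap hallMin (cutLo k) (cutHi k) (cutLo (k - 1)) (1 / (k + cutHi 1)) (1 / (k + cutLo 1)) := by
  obtain ⟨hk1, hk3⟩ := hk
  obtain ⟨A1, A2⟩ := hallMin_mem_Icc
  obtain ⟨B1, B2⟩ := hallMax_mem_Icc
  obtain ⟨g1, g1'⟩ := cutLo_one_mem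
  obtain ⟨g2, g2'⟩ := cutLo_two_mem
  obtain ⟨g3, g3'⟩ := cutLo_three_mem
  obtain ⟨h1, h1'⟩ := cutHi_one_mem
  obtain ⟨h2, h2'⟩ := cutHi_two_mem
  obtain ⟨h3, h3'⟩ := cutHi_three_mem
  interval_cases k
  · obtain ⟨u, u'⟩ := inv_add_mem_Icc (k := (1 : ℕ)) (L := 0.6463) (U := 0.6467) cutHi_one_mem
      (by norm_num) (by norm_num) (by norm_num) (by norm_num) (by norm_num)
    obtain ⟨v, v'⟩ := inv_add_mem_Icc (k := (1 : ℕ)) (L := 0.688) (U := 0.6884) cutLo_one_mem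
      (by norm_num) (by norm_num) (by norm_num) (by norm_num) (by norm_num)
    rw [Nat.sub_self, cutLo_zero]
    constructor <;> linarith
  · obtain ⟨u, u'⟩ := inv_add_mem_Icc (k := (2 : ℕ)) (L := 0.3925) (U := 0.3928) cutHi_one_mem
      (by norm_num) (by norm_num) (by norm_num) (by norm_num) (by norm_num)
    obtain ⟨v, v'⟩ := inv_add_mem_Icc (k := (2 : ℕ)) (L := 0.4075) (U := 0.4078) cutLo_one_mem
      (by norm_num) (by norm_num) (by norm_num) (by norm_num) (by norm_num)
    rw [show 2 - 1 = 1 from rfl]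
    constructor <;> linarith
  · obtain ⟨u, u'⟩ := inv_add_mem_Icc (k := (3 : ℕ)) (L := 0.2818) (U := 0.2821) cutHi_one_mem
      (by norm_num) (by norm_num) (by norm_num) (by norm_num) (by norm_num)
    obtain ⟨v, v'⟩ := inv_add_mem_Icc (k := (3 : ℕ)) (L := 0.2894) (U := 0.2898) cutLo_one_mem
      (by norm_num) (by norm_num) (by norm_num) (by norm_num) (by norm_num)
    rw [show 3 - 1 = 2 from rfl]
    constructor <;> linarith

theorem goodGap_left {k : ℕ} (hk : k ∈ Set.Icc 1 2) :
    GoodGap hallMin (cutLo k) (cutHi k) (cutLo (k - 1)) (cutLo (k + 1)) (cutHi (k + 1)) := by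
  obtain ⟨hk1, hk3⟩ := hk
  obtain ⟨A1, A2⟩ := hallMin_mem_Icc
  obtain ⟨B1, B2⟩ := hallMax_mem_Icc
  obtain ⟨g1, g1'⟩ := cutLo_one_mem
  obtain ⟨g2, g2'⟩ := cutLo_two_mem
  obtain ⟨g3, g3'⟩ := cutLo_three_mem
  obtain ⟨h1, h1'⟩ := cutHi_one_mem
  obtain ⟨h2, h2'⟩ := cutHi_two_mem
  obtain ⟨h3, h3'⟩ := cutHi_three_mem
  interval_cases k
  · rw [Nat.sub_self, cutLo_zero]
    constructor <;> linarith
  · rw [show 2 - 1 = 1 from rfl]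
    constructor <;> linarith

theorem goodGap_left_three :
    GoodGap hallMin (cutLo 3) (cutHi 3) (cutLo 2) (1 / ((4 : ℕ) + cutHi 1))
      (1 / ((4 : ℕ) + cutLo 1)) := by
  obtain ⟨A1, A2⟩ := hallMin_mem_Icc
  obtain ⟨g2, g2'⟩ := cutLo_two_mem
  obtain ⟨g3, g3'⟩ := cutLo_three_mem
  obtain ⟨h3, h3'⟩ := cutHi_three_mem
  obtain ⟨u, u'⟩ := inv_add_mem_Icc (k := (4 : ℕ)) (L := 0.2198) (U := 0.22) cutHi_one_mem
    (by norm_num) (by norm_num) (by norm_num) (by norm_num) (by norm_num)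
  obtain ⟨v, v'⟩ := inv_add_mem_Icc (k := (4 : ℕ)) (L := 0.2245) (U := 0.2247) cutLo_one_mem
    (by norm_num) (by norm_num) (by norm_num) (by norm_num) (by norm_num)
  constructor <;> linarith

/-- The points `A < g < h < b` sent to an increasing quadruple by a monotone map `f`
with sign `σ`. -/
def IsSortedImage (f : ℝ → ℝ) (σ A g h b a' g' h' b' : ℝ) : Prop :=
  (σ = 1 ∧ a' = f A ∧ g' = f g ∧ h' = f h ∧ b' = f b) ∨
    (σ = -1 ∧ a' = f b ∧ g' = f h ∧ h' = f g ∧ b' = f A)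

/-- The cells of the dissection of the convex hull of `hallSet`: an interval `[a, b]` together
with the gap `(g, h)` to be removed next. -/
def HallCell (a g h b : ℝ) : Prop :=
  ∃ f σ q q', IsBranch f σ q q' ∧ ∃ k ∈ Set.Icc 1 3,
    IsSortedImage f σ hallMin (cutLo k) (cutHi k) (cutLo (k - 1)) a g h b

/-- Lengths in the parent cell `A, g, h, b` compared with its gap, and the gap `u, v` of a child. -/
theorem GoodGap.lengths {f : ℝ → ℝ} {σ q q' A g h b u v : ℝ} (hf : IsBranch f σ q q')
    (H : GoodGap A g h b u v) :
    0 < σ * (f h - f g) ∧ σ * (f h - f g) ≤ σ * (f g - f A) ∧ σ * (f h - f g) ≤ σ * (f b - f h) ∧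
      σ * (f b - f A) ≤ 20 * (σ * (f h - f g)) ∧ σ * (f v - f u) ≤ σ * (f h - f g) := by
  obtain ⟨H0, H1, H2, H3, H4, H5, H6, H7, H8, H9, H10, H11⟩ := H
  have hq := hf.pos
  have hq' := hf.nonneg
  have hle := hf.le
  have hg : 0 ≤ g := by linarith
  have hh : 0 ≤ h := by linarith
  have hb : 0 ≤ b := by linarith
  have hv : 0 ≤ v := by linarith
  have hσ : ∀ x : ℝ, σ * (σ * x) = x := by
    intro x
    rcases hf.sign with h | h <;> simp [h]
  rw [hf.sub _ _ hh hg, hf.sub _ _ hg H0, hf.sub _ _ hb hh, hf.sub _ _ hb H0,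
    hf.sub _ _ hv H7, hσ, hσ, hσ, hσ, hσ]
  refine ⟨div_pos (by linarith) (by positivity), ?_, ?_, ?_, ?_⟩
  · have := mobius_length_le (r₁ := 1) (r₂ := 1) (C := 1) hq hq' hle hg hh H0 hg le_rfl le_rfl
      H1.le (by linarith) (by linarith) (by linarith)
    linarith
  · have := mobius_length_le (r₁ := 1.3) (r₂ := 1.3) (C := 1) hq hq' hle hg hh hh hb (by norm_num)
      (by norm_num) H1.le (by linarith) (by linarith) (by linarith)
    linarith
  · exact mobius_length_le (r₁ := 1.3) (r₂ := 1.3) (C := 20) hq hq' hle H0 hb hg hh (by norm_num)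
      (by norm_num) (by linarith) (by linarith) (by linarith) (by linarith)
  · have := mobius_length_le (r₁ := 1.2) (r₂ := 1.2) (C := 1) hq hq' hle H7 hv hg hh (by norm_num)
      (by norm_num) H8 (by linarith) (by linarith) (by linarith)
    linarith

theorem IsBranch.exists_child_inv {f : ℝ → ℝ} {σ q q' δ : ℝ} (hf : IsBranch f σ q q') {d : ℕ}
    (hd : d ∈ Set.Icc 1 4) (hgap : σ * (f (1 / (d + cutLo 1)) - f (1 / (d + cutHi 1))) ≤ δ) :
    (σ = 1 → ∃ g h, HallCell (f (1 / (d + hallMax))) g h (f (1 / (d + hallMin))) ∧ h - g ≤ δ) ∧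
    (σ = -1 → ∃ g h, HallCell (f (1 / (d + hallMin))) g h (f (1 / (d + hallMax))) ∧ h - g ≤ δ) := by
  have hf' := hf.comp_inv hd
  refine ⟨fun hσ => ⟨f (1 / (d + cutHi 1)), f (1 / (d + cutLo 1)), ⟨_, _, _, _, hf', 1, by simp,
    Or.inr ⟨by simp [hσ], ?_, rfl, rfl, rfl⟩⟩, by simpa [hσ] using hgap⟩,
    fun hσ => ⟨f (1 / (d + cutLo 1)), f (1 / (d + cutHi 1)), ⟨_, _, _, _, hf', 1, by simp,
    Or.inl ⟨by simp [hσ], rfl, rfl, rfl, ?_⟩⟩, by simpa [hσ] using hgap⟩⟩ <;>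
  simp only [Nat.sub_self, cutLo_zero]

theorem IsBranch.exists_right_child {f : ℝ → ℝ} {σ q q' : ℝ} (hf : IsBranch f σ q q') {k : ℕ}
    (hk : k ∈ Set.Icc 1 3) :
    (σ = 1 → ∃ g h, HallCell (f (cutHi k)) g h (f (cutLo (k - 1))) ∧
      h - g ≤ σ * (f (cutHi k) - f (cutLo k))) ∧
    (σ = -1 → ∃ g h, HallCell (f (cutLo (k - 1))) g h (f (cutHi k)) ∧
      h - g ≤ σ * (f (cutHi k) - f (cutLo k))) := by
  have := hf.exists_child_inv (d := k) ⟨hk.1, hk.2.trans (by norm_num)⟩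
    ((goodGap_right hk).lengths hf).2.2.2.2
  rw [show cutLo (k - 1) = 1 / (k + hallMin) by rw [cutLo, Nat.sub_add_cancel hk.1]]
  exact this

theorem IsBranch.exists_left_child {f : ℝ → ℝ} {σ q q' : ℝ} (hf : IsBranch f σ q q') {k : ℕ}
    (hk : k ∈ Set.Icc 1 3) :
    (σ = 1 → ∃ g h, HallCell (f hallMin) g h (f (cutLo k)) ∧
      h - g ≤ σ * (f (cutHi k) - f (cutLo k))) ∧
    (σ = -1 → ∃ g h, HallCell (f (cutLo k)) g h (f hallMin) ∧
      h - g ≤ σ * (f (cutHi k) - f (cutLo k))) := by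
  rcases hk.2.eq_or_lt with rfl | hlt
  · have := hf.exists_child_inv (d := 4) (by simp) (goodGap_left_three.lengths hf).2.2.2.2
    rw [show 1 / ((4 : ℕ) + hallMax) = hallMin from cutHi_four] at this
    exact this
  · have hgap := ((goodGap_left (k := k) ⟨hk.1, by omega⟩).lengths hf).2.2.2.2
    have hk' : k + 1 ∈ Set.Icc 1 3 := ⟨by omega, by omega⟩
    exact ⟨fun hσ => ⟨_, _, ⟨f, σ, q, q', hf, k + 1, hk', Or.inl ⟨hσ, rfl, rfl, rfl, rfl⟩⟩,
        by simpa [hσ] using hgap⟩,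
      fun hσ => ⟨_, _, ⟨f, σ, q, q', hf, k + 1, hk', Or.inr ⟨hσ, rfl, rfl, rfl, rfl⟩⟩,
        by simpa [hσ] using hgap⟩⟩

theorem HallCell.split {a g h b : ℝ} (c : HallCell a g h b) :
    0 < h - g ∧ h - g ≤ g - a ∧ h - g ≤ b - h ∧
      (∃ g' h', HallCell a g' h' g ∧ h' - g' ≤ h - g) ∧
      (∃ g' h', HallCell h g' h' b ∧ h' - g' ≤ h - g) := by
  obtain ⟨f, σ, q, q', hf, k, hk, hs⟩ := c
  obtain ⟨l1, l2, l3, -, -⟩ := (goodGap_right hk).lengths hf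
  have hL := hf.exists_left_child hk
  have hR := hf.exists_right_child hk
  rcases hs with ⟨hσ, rfl, rfl, rfl, rfl⟩ | ⟨hσ, rfl, rfl, rfl, rfl⟩
  · have hL' := hL.1 hσ
    have hR' := hR.1 hσ
    simp only [hσ, one_mul] at l1 l2 l3 hL' hR'
    exact ⟨l1, l2, l3, hL', hR'⟩
  · have hL' := hL.2 hσ
    have hR' := hR.2 hσ
    simp only [hσ, neg_mul, one_mul, neg_sub] at l1 l2 l3 hL' hR'
    exact ⟨l1, l3, l2, hR', hL'⟩

theorem HallCell.length_le {a g h b : ℝ} (c : HallCell a g h b) : b - a ≤ 20 * (h - g) := by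
  obtain ⟨f, σ, q, q', hf, k, hk, hs⟩ := c
  obtain ⟨-, -, -, l, -⟩ := (goodGap_right hk).lengths hf
  rcases hs with ⟨hσ, rfl, rfl, rfl, rfl⟩ | ⟨hσ, rfl, rfl, rfl, rfl⟩ <;>
  · simp only [hσ] at l
    linarith

theorem HallCell.exists_mem {a g h b : ℝ} (c : HallCell a g h b) :
    ∃ x ∈ hallSet, a ≤ x ∧ x ≤ b := by
  obtain ⟨l1, l2, l3, -⟩ := c.split
  obtain ⟨f, σ, q, q', hf, k, hk, hs⟩ := c
  refine ⟨f hallMin, hf.maps _ hallMin_mem_hallSet, ?_⟩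
  rcases hs with ⟨hσ, rfl, rfl, rfl, rfl⟩ | ⟨hσ, rfl, rfl, rfl, rfl⟩
  · exact ⟨le_rfl, by linarith⟩
  · exact ⟨by linarith, le_rfl⟩

/-- Hall's theorem: `F(4) + F(4)` contains the interval `[2 min F(4), 2 max F(4)]`. -/
theorem exists_add_eq_of_mem_Icc {s : ℝ} (hs : s ∈ Set.Icc (2 * hallMin) (2 * hallMax)) :
    ∃ x ∈ hallSet, ∃ y ∈ hallSet, x + y = s := by
  have hcpt : IsCompact (Set.image2 (· + ·) hallSet hallSet) :=
    isCompact_hallSet.add isCompact_hallSet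
  have hcl := hcpt.isClosed
  suffices h : s ∈ closure (Set.image2 (· + ·) hallSet hallSet) by
    rw [hcl.closure_eq] at h
    obtain ⟨x, hx, y, hy, h⟩ := h
    exact ⟨x, hx, y, hy, h⟩
  rw [Metric.mem_closure_iff]
  intro ε hε
  have c : HallCell hallMin (cutLo 1) (cutHi 1) hallMax :=
    ⟨_, _, _, _, isBranch_id, 1, by simp, Or.inl ⟨rfl, rfl, rfl, rfl, cutLo_zero.symm⟩⟩
  obtain ⟨l1, l2, l3, -⟩ := c.split
  obtain ⟨n, hn⟩ := exists_nat_ge (((hallMax - hallMin) + (hallMax - hallMin)) / (ε / 50))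
  rw [div_le_iff₀ (by positivity)] at hn
  obtain ⟨a, g, h, b, a', g', h', b', c, c', hs1, hs2, hg, hg'⟩ :=
    exists_small_cells (fun _ _ _ _ => HallCell.split) s n _ _ _ _ _ _ _ _ c c (by linarith)
      (by linarith) (by linarith [hs.1]) (by linarith [hs.2]) hn
  obtain ⟨x, hx, hx1, hx2⟩ := c.exists_mem
  obtain ⟨y, hy, hy1, hy2⟩ := c'.exists_mem
  have := c.length_le
  have := c'.length_le
  refine ⟨_, ⟨x, hx, y, hy, rfl⟩, ?_⟩
  rw [Real.dist_eq, abs_lt]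
  constructor <;> linarith

/-- `X` is the sequence of complete tails `[0; aₙ, aₙ₊₁, …]` of the continued fraction with
partial quotients `a`. -/
structure IsTails (a : ℕ → ℕ) (X : ℕ → ℝ) : Prop where
  one_le : ∀ n, 1 ≤ a n
  nonneg : ∀ n, 0 ≤ X n
  le_one : ∀ n, X n ≤ 1
  mul_eq : ∀ n, X n * (a n + X (n + 1)) = 1

theorem exists_isTails {a : ℕ → ℕ} (ha : ∀ n, 1 ≤ a n) : ∃ X, IsTails a X := by
  let C : ℕ → Set (ℕ → ℝ) := fun m =>
    (Set.univ.pi fun _ => Set.Icc 0 1) ∩ {X | ∀ n < m, X n * (a n + X (n + 1)) = 1}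
  have hcl : ∀ m, IsClosed (C m) := fun m => by
    refine (isClosed_set_pi fun _ _ => isClosed_Icc).inter ?_
    simp only [Set.ofPred_forall]
    refine isClosed_iInter fun n => isClosed_iInter fun _ => isClosed_eq ?_ continuous_const
    fun_prop
  have hne : ∀ m (a : ℕ → ℕ), (∀ n, 1 ≤ a n) → ∃ X : ℕ → ℝ, (∀ n, X n ∈ Set.Icc (0 : ℝ) 1) ∧
      ∀ n < m, X n * (a n + X (n + 1)) = 1 := by
    intro m
    induction m with
    | zero => exact fun a _ => ⟨fun _ => 0, by simp, by simp⟩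
    | succ m ih =>
      intro a ha
      obtain ⟨X, hX, h⟩ := ih (fun n => a (n + 1)) fun n => ha _
      have h1 : (1 : ℝ) ≤ a 0 := by exact_mod_cast ha 0
      have h0 := (hX 0).1
      have hpos : 0 < a 0 + X 0 := by linarith
      refine ⟨fun | 0 => 1 / (a 0 + X 0) | n + 1 => X n, ?_, ?_⟩
      · rintro (_ | n)
        · exact ⟨by positivity, (div_le_one hpos).2 (by linarith)⟩
        · exact hX n
      · rintro (_ | n) hn
        · change 1 / (a 0 + X 0) * (a 0 + X 0) = 1
          field_simp
        · exact h n (by omega)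
  obtain ⟨X, hX⟩ := IsCompact.nonempty_iInter_of_sequence_nonempty_isCompact_isClosed C
    (fun m X hX => ⟨hX.1, fun n hn => hX.2 n (hn.trans (Nat.lt_succ_self m))⟩)
    (fun m => by
      obtain ⟨X, h1, h2⟩ := hne m a ha
      exact ⟨X, fun n _ => h1 n, h2⟩)
    ((isCompact_univ_pi fun _ => isCompact_Icc).of_isClosed_subset (hcl 0)
      Set.inter_subset_left) hcl
  rw [Set.mem_iInter] at hX
  exact ⟨X, ha, fun n => ((hX 0).1 n trivial).1, fun n => ((hX 0).1 n trivial).2,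
    fun n => (hX (n + 1)).2 n (Nat.lt_succ_self n)⟩

/-- Denominators of the convergents of `[0; a₀, a₁, …]`. -/
def cfDen (a : ℕ → ℕ) : ℕ → ℕ
  | 0 => 1
  | 1 => a 0
  | n + 2 => a (n + 1) * cfDen a (n + 1) + cfDen a n

/-- Numerators of the convergents of `[0; a₀, a₁, …]`. -/
def cfNum (a : ℕ → ℕ) : ℕ → ℕ
  | 0 => 0
  | 1 => 1
  | n + 2 => a (n + 1) * cfNum a (n + 1) + cfNum a n

theorem cfNum_mul_cfDen_sub (a : ℕ → ℕ) (n : ℕ) :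
    (cfNum a (n + 1) : ℤ) * cfDen a n - cfNum a n * cfDen a (n + 1) = (-1) ^ n := by
  induction n with
  | zero => simp [cfNum, cfDen]
  | succ n ih =>
    simp only [cfNum, cfDen, pow_succ, ← ih]
    push_cast
    ring

section Tails

variable {a : ℕ → ℕ} {X : ℕ → ℝ}

theorem cfDen_pos (ha : ∀ n, 1 ≤ a n) : ∀ n, 0 < cfDen a n
  | 0 => one_pos
  | 1 => ha 0
  | n + 2 => by
    have := cfDen_pos ha n
    simp only [cfDen]
    omega

theorem cfDen_add_le (ha : ∀ n, 1 ≤ a n) (n : ℕ) :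
    cfDen a (n + 1) + cfDen a n ≤ cfDen a (n + 2) := by
  simp only [cfDen]
  have := ha (n + 1)
  gcongr
  nlinarith

theorem monotone_cfDen (ha : ∀ n, 1 ≤ a n) : Monotone (cfDen a) := by
  refine monotone_nat_of_le_succ fun n => ?_
  rcases n with _ | n
  · exact ha 0
  · have := cfDen_add_le ha n
    simp only [Nat.add_assoc, Nat.reduceAdd]
    omega

theorem le_cfDen (ha : ∀ n, 1 ≤ a n) : ∀ n, n ≤ cfDen a n
  | 0 => Nat.zero_le _
  | 1 => ha 0
  | n + 2 => by
    have h1 := le_cfDen ha (n + 1)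
    have h2 := cfDen_pos ha n
    have h3 := cfDen_add_le ha n
    omega

theorem IsTails.pos (h : IsTails a X) (n : ℕ) : 0 < X n := by
  refine (h.nonneg n).lt_of_ne fun h0 => ?_
  have := h.mul_eq n
  simp [← h0] at this

theorem IsTails.error_succ (h : IsTails a X) (n : ℕ) :
    cfDen a (n + 1) * X 0 - cfNum a (n + 1) = -(X (n + 1) * (cfDen a n * X 0 - cfNum a n)) := by
  induction n with
  | zero =>
    have := h.mul_eq 0
    simp [cfDen, cfNum]
    linarith
  | succ n ih =>
    have h1 := h.mul_eq (n + 1)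
    simp only [cfDen, cfNum, Nat.add_assoc, Nat.reduceAdd] at *
    push_cast
    linear_combination (a (n + 1) + X (n + 2)) * ih - (cfDen a n * X 0 - cfNum a n) * h1

theorem IsTails.error_mul (h : IsTails a X) (n : ℕ) :
    (cfDen a n * X 0 - cfNum a n) * (cfDen a (n + 1) + X (n + 1) * cfDen a n) = (-1) ^ n := by
  have h1 := h.error_succ n
  have h2 : (cfNum a (n + 1) : ℝ) * cfDen a n - cfNum a n * cfDen a (n + 1) = (-1) ^ n := by
    exact_mod_cast cfNum_mul_cfDen_sub a n
  linear_combination h2 + cfDen a n * h1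

theorem IsTails.abs_error_mul (h : IsTails a X) (n : ℕ) :
    |cfDen a n * X 0 - cfNum a n| * (cfDen a (n + 1) + X (n + 1) * cfDen a n) = 1 := by
  have h1 := congrArg abs (h.error_mul n)
  have h2 := h.nonneg (n + 1)
  rwa [abs_mul, abs_pow, abs_neg, abs_one, one_pow,
    abs_of_nonneg (a := cfDen a (n + 1) + X (n + 1) * cfDen a n) (by positivity)] at h1

/-- Convergents are best approximations. -/
theorem IsTails.abs_error_le (h : IsTails a X) {n : ℕ} {p q : ℤ} (hq0 : 0 < q)
    (hq : q < cfDen a (n + 1)) : |cfDen a n * X 0 - cfNum a n| ≤ |q * X 0 - p| := by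
  set e : ℤ := (-1) ^ n with he
  have hee : e * e = 1 := by rw [he, ← mul_pow]; simp
  have hdet := cfNum_mul_cfDen_sub a n
  rw [← he] at hdet
  obtain ⟨x, hx⟩ : ∃ x, x = e * (q * cfNum a (n + 1) - p * cfDen a (n + 1)) := ⟨_, rfl⟩
  obtain ⟨y, hy⟩ : ∃ y, y = e * (p * cfDen a n - q * cfNum a n) := ⟨_, rfl⟩
  have hqxy : q = x * cfDen a n + y * cfDen a (n + 1) := by
    rw [hx, hy]
    linear_combination -q * hee - e * q * hdet
  have hpxy : p = x * cfNum a n + y * cfNum a (n + 1) := by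
    rw [hx, hy]
    linear_combination -p * hee - e * p * hdet
  have hfac : q * X 0 - p = (cfDen a n * X 0 - cfNum a n) * (x - y * X (n + 1)) := by
    have h1 := h.error_succ n
    rw [hqxy, hpxy]
    push_cast
    linear_combination y * h1
  have hD0 : (0 : ℤ) < cfDen a n := by exact_mod_cast cfDen_pos h.one_le n
  have hD1 : (0 : ℤ) < cfDen a (n + 1) := by exact_mod_cast cfDen_pos h.one_le (n + 1)
  have hX := h.nonneg (n + 1)
  rw [hfac, abs_mul]
  refine le_mul_of_one_le_right (abs_nonneg _) ?_
  rcases lt_trichotomy y 0 with hy0 | hy0 | hy0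
  · have : 1 ≤ x := by
      by_contra! hc
      nlinarith
    have hx1 : (1 : ℝ) ≤ x := by exact_mod_cast this
    have hy1 : (y : ℝ) ≤ 0 := by exact_mod_cast hy0.le
    exact le_trans (by nlinarith) (le_abs_self _)
  · have hx0 : x ≠ 0 := by
      rintro rfl
      simp [hy0] at hqxy
      omega
    rw [hy0]
    simpa using (by exact_mod_cast Int.one_le_abs hx0 : (1 : ℝ) ≤ |(x : ℝ)|)
  · have : x ≤ -1 := by
      by_contra! hc
      nlinarith
    have hx1 : (x : ℝ) ≤ -1 := by exact_mod_cast this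
    have hy1 : (0 : ℝ) ≤ y := by exact_mod_cast hy0.le
    exact le_trans (by nlinarith) (neg_le_abs _)

theorem IsTails.abs_error_pos (h : IsTails a X) (n : ℕ) :
    0 < |cfDen a n * X 0 - cfNum a n| := by
  refine (abs_nonneg _).lt_of_ne fun h0 => ?_
  have := h.abs_error_mul n
  simp [← h0] at this

theorem IsTails.irrational (h : IsTails a X) : Irrational (X 0) := by
  rintro ⟨r, hr⟩
  have hlt : (r.den : ℤ) < cfDen a (r.den + 1) := by
    have := le_cfDen h.one_le (r.den + 1)
    omega
  have := (h.abs_error_pos r.den).trans_le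
    (h.abs_error_le (p := r.num) (by exact_mod_cast r.pos) hlt)
  have hd : (r.den : ℝ) ≠ 0 := by exact_mod_cast r.den_ne_zero
  rw [← hr, Rat.cast_def] at this
  push_cast at this
  rw [mul_div_cancel₀ _ hd] at this
  simp at this

/-- The value `1 / (q ‖q α‖)` at the denominator `q` of the `n`-th convergent. -/
noncomputable def convergentVal (a : ℕ → ℕ) (X : ℕ → ℝ) (n : ℕ) : ℝ :=
  (cfDen a (n + 1) + X (n + 1) * cfDen a n) / cfDen a n

theorem IsTails.convergentVal_eq (h : IsTails a X) (n : ℕ) :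
    convergentVal a X n = 1 / (cfDen a n * |cfDen a n * X 0 - cfNum a n|) := by
  have h1 := h.abs_error_mul n
  have h2 := h.abs_error_pos n
  have h3 : (0 : ℝ) < cfDen a n := by exact_mod_cast cfDen_pos h.one_le n
  rw [convergentVal, div_eq_div_iff h3.ne' (by positivity)]
  linear_combination (cfDen a n : ℝ) * h1

theorem IsTails.convergentVal_le (h : IsTails a X) (n : ℕ) :
    convergentVal a X n ≤ 1 / (cfDen a n * distNearestInt (cfDen a n * X 0)) := by
  have h3 : (0 : ℝ) < cfDen a n := by exact_mod_cast cfDen_pos h.one_le n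
  have hpos : 0 < distNearestInt (cfDen a n * X 0) := by
    have := h.irrational.natCast_mul (cfDen_pos h.one_le n).ne'
    exact abs_pos.2 (sub_ne_zero.2 (this.ne_int _))
  rw [h.convergentVal_eq]
  refine one_div_le_one_div_of_le (by positivity) ?_
  gcongr
  simpa [distNearestInt] using round_le (cfDen a n * X 0) (cfNum a n)

theorem IsTails.le_convergentVal (h : IsTails a X) {n q : ℕ} (hq : cfDen a n ≤ q)
    (hq' : q < cfDen a (n + 1)) :
    1 / (q * distNearestInt (q * X 0)) ≤ convergentVal a X n := by
  have h3 : (0 : ℝ) < cfDen a n := by exact_mod_cast cfDen_pos h.one_le n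
  rw [h.convergentVal_eq]
  have h2 := h.abs_error_pos n
  refine one_div_le_one_div_of_le (by positivity) ?_
  have := h.abs_error_le (n := n) (p := round (q * X 0)) (q := q)
    (by exact_mod_cast (cfDen_pos h.one_le n).trans_le hq) (by exact_mod_cast hq')
  unfold distNearestInt
  push_cast at this
  gcongr

theorem exists_cfDen_le (ha : ∀ n, 1 ≤ a n) {q : ℕ} (hq : 1 ≤ q) :
    ∃ n, cfDen a n ≤ q ∧ q < cfDen a (n + 1) := by
  have hex : ∃ n, q < cfDen a n := ⟨q + 1, Nat.lt_of_succ_le (le_cfDen ha _)⟩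
  obtain ⟨n, hn⟩ : ∃ n, Nat.find hex = n + 1 := by
    refine Nat.exists_eq_succ_of_ne_zero fun h0 => ?_
    have := Nat.find_spec hex
    rw [h0] at this
    simp only [cfDen] at this
    omega
  exact ⟨n, not_lt.1 (Nat.find_min hex (by omega)), hn ▸ Nat.find_spec hex⟩

open Filter in
theorem IsTails.lagrangeVal_eq (h : IsTails a X) {t : ℝ}
    (hle : ∀ ε > 0, ∀ᶠ n in atTop, convergentVal a X n ≤ t + ε)
    (hge : ∀ ε > 0, ∃ᶠ n in atTop, t - ε ≤ convergentVal a X n) :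
    lagrangeVal (X 0) = ENNReal.ofReal t := by
  apply le_antisymm
  · have key : ∀ ε > 0, lagrangeVal (X 0) ≤ ENNReal.ofReal (t + ε) := by
      intro ε hε
      obtain ⟨N, hN⟩ := eventually_atTop.1 (hle ε hε)
      refine limsup_le_of_le (by isBoundedDefault) ?_
      filter_upwards [eventually_ge_atTop (cfDen a N)] with q hq
      obtain ⟨n, hn, hn'⟩ := exists_cfDen_le h.one_le ((cfDen_pos h.one_le N).trans_le hq)
      refine ENNReal.ofReal_le_ofReal ((h.le_convergentVal hn hn').trans (hN n ?_))
      by_contra! hc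
      have := monotone_cfDen h.one_le (show n + 1 ≤ N from hc)
      omega
    have hlim : Tendsto (fun ε : ℝ => ENNReal.ofReal (t + ε)) (nhdsWithin 0 (Set.Ioi 0))
        (nhds (ENNReal.ofReal t)) := by
      have : Continuous fun ε : ℝ => ENNReal.ofReal (t + ε) :=
        ENNReal.continuous_ofReal.comp (by fun_prop)
      simpa using (this.tendsto 0).mono_left nhdsWithin_le_nhds
    exact ge_of_tendsto hlim (by filter_upwards [self_mem_nhdsWithin] with ε hε using key ε hε)
  · have key : ∀ ε > 0, ENNReal.ofReal (t - ε) ≤ lagrangeVal (X 0) := by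
      intro ε hε
      refine le_limsup_of_frequently_le ?_ (by isBoundedDefault)
      rw [frequently_atTop]
      intro N
      obtain ⟨n, hn, hn'⟩ := frequently_atTop.1 (hge ε hε) N
      exact ⟨cfDen a n, hn.trans (le_cfDen h.one_le n),
        ENNReal.ofReal_le_ofReal (hn'.trans (h.convergentVal_le n))⟩
    have hlim : Tendsto (fun ε : ℝ => ENNReal.ofReal (t - ε)) (nhdsWithin 0 (Set.Ioi 0))
        (nhds (ENNReal.ofReal t)) := by
      have : Continuous fun ε : ℝ => ENNReal.ofReal (t - ε) :=
        ENNReal.continuous_ofReal.comp (by fun_prop)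
      simpa using (this.tendsto 0).mono_left nhdsWithin_le_nhds
    exact le_of_tendsto hlim (by filter_upwards [self_mem_nhdsWithin] with ε hε using key ε hε)

/-- The backward continued fraction `[0; aₙ, aₙ₋₁, …, a₀]`. -/
noncomputable def backTail (a : ℕ → ℕ) (n : ℕ) : ℝ := cfDen a n / cfDen a (n + 1)

theorem backTail_mem_Icc (ha : ∀ n, 1 ≤ a n) (n : ℕ) : backTail a n ∈ Set.Icc (0 : ℝ) 1 := by
  refine ⟨by unfold backTail; positivity, div_le_one_of_le₀ ?_ (by positivity)⟩
  exact_mod_cast monotone_cfDen ha (Nat.le_succ n)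

theorem backTail_succ_mul (ha : ∀ n, 1 ≤ a n) (n : ℕ) :
    backTail a (n + 1) * (a (n + 1) + backTail a n) = 1 := by
  have h1 : (0 : ℝ) < cfDen a (n + 1) := by exact_mod_cast cfDen_pos ha _
  have h2 : (0 : ℝ) < cfDen a (n + 2) := by exact_mod_cast cfDen_pos ha _
  simp only [backTail, Nat.add_assoc, Nat.reduceAdd]
  field_simp
  simp [cfDen, mul_comm]

theorem convergentVal_succ (ha : ∀ n, 1 ≤ a n) (n : ℕ) :
    convergentVal a X (n + 1) = a (n + 1) + backTail a n + X (n + 2) := by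
  have h1 : (0 : ℝ) < cfDen a (n + 1) := by exact_mod_cast cfDen_pos ha _
  simp only [backTail, convergentVal, Nat.add_assoc, Nat.reduceAdd]
  field_simp
  simp [cfDen, mul_comm]

end Tails

theorem abs_tails_sub_le {d : ℕ → ℕ} (hd : ∀ n, 1 ≤ d n) (k : ℕ) : ∀ (m : ℕ) {u v : ℕ → ℝ},
    (∀ j, u j ∈ Set.Icc (0 : ℝ) 1) → (∀ j, v j ∈ Set.Icc (0 : ℝ) 1) →
    (∀ j < k, u j * (d (m + j) + u (j + 1)) = 1) → (∀ j < k, v j * (d (m + j) + v (j + 1)) = 1) →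
    |u 0 - v 0| ≤ 2 * (1 / 2) ^ k := by
  induction k using Nat.twoStepInduction with
  | zero =>
    intro m u v hu hv _ _
    rw [abs_le]
    constructor <;> linarith [(hu 0).1, (hu 0).2, (hv 0).1, (hv 0).2]
  | one =>
    intro m u v hu hv _ _
    rw [abs_le]
    constructor <;> linarith [(hu 0).1, (hu 0).2, (hv 0).1, (hv 0).2]
  | more k ih _ =>
    intro m u v hu hv hu' hv'
    have step : ∀ {x y : ℝ} {e : ℕ}, x * (e + y) = 1 → 1 ≤ e → 0 ≤ x → 0 ≤ y → y ≤ 1 →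
        x * y ≤ 1 / 2 := by
      intro x y e h he hx hy hy1
      have he' : (1 : ℝ) ≤ e := by exact_mod_cast he
      nlinarith
    have hux := step (hu' 0 (by omega)) (hd _) (hu 0).1 (hu 1).1 (hu 1).2
    have hvx := step (hv' 0 (by omega)) (hd _) (hv 0).1 (hv 1).1 (hv 1).2
    have e0 : u 0 - v 0 = (u 0 * u 1) * (v 0 * v 1) * (u 2 - v 2) := by
      have a0 := hu' 0 (by omega)
      have a1 := hu' 1 (by omega)
      have b0 := hv' 0 (by omega)
      have b1 := hv' 1 (by omega)
      simp only [zero_add, Nat.reduceAdd] at a0 a1 b0 b1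
      have c0 : u 0 - v 0 = u 0 * v 0 * (v 1 - u 1) := by
        linear_combination v 0 * a0 - u 0 * b0
      have c1 : u 1 - v 1 = u 1 * v 1 * (v 2 - u 2) := by
        linear_combination v 1 * a1 - u 1 * b1
      linear_combination c0 - u 0 * v 0 * c1
    have h2 := ih (m + 2) (u := fun j => u (j + 2)) (v := fun j => v (j + 2))
      (fun j => hu _) (fun j => hv _)
      (fun j hj => by
        have := hu' (j + 2) (by omega)
        rwa [show m + (j + 2) = m + 2 + j by ring, show j + 2 + 1 = j + 1 + 2 by ring] at this)
      (fun j hj => by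
        have := hv' (j + 2) (by omega)
        rwa [show m + (j + 2) = m + 2 + j by ring, show j + 2 + 1 = j + 1 + 2 by ring] at this)
    simp only [zero_add] at h2
    have pu : 0 ≤ u 0 * u 1 := mul_nonneg (hu 0).1 (hu 1).1
    have pv : 0 ≤ v 0 * v 1 := mul_nonneg (hv 0).1 (hv 1).1
    rw [e0, abs_mul, abs_of_nonneg (mul_nonneg pu pv)]
    calc u 0 * u 1 * (v 0 * v 1) * |u 2 - v 2| ≤ 1 / 2 * (1 / 2) * (2 * (1 / 2) ^ k) := by gcongr
      _ = 2 * (1 / 2) ^ (k + 2) := by ring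

/-- The concatenation of the blocks `cₖ₋₁, …, c₀, N, b₀, …, bₖ₋₁` for `k = 0, 1, 2, …`. The block
with index `k` occupies the positions `k ^ 2, …, k ^ 2 + 2 * k`. -/
def blockSeq (N : ℕ) (b c : ℕ → ℕ) (i : ℕ) : ℕ :=
  let m := i.sqrt * i.sqrt + i.sqrt
  if i = m then N else if m < i then b (i - m - 1) else c (m - i - 1)

theorem blockSeq_center (N : ℕ) (b c : ℕ → ℕ) (k : ℕ) : blockSeq N b c (k * k + k) = N := by
  simp [blockSeq, Nat.sqrt_add_eq k (show k ≤ k + k by omega)]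

theorem blockSeq_right (N : ℕ) (b c : ℕ → ℕ) {k j : ℕ} (hj : j < k) :
    blockSeq N b c (k * k + k + 1 + j) = b j := by
  have h : Nat.sqrt (k * k + k + 1 + j) = k := by
    rw [show k * k + k + 1 + j = k * k + (k + 1 + j) by ring]
    exact Nat.sqrt_add_eq k (by omega)
  simp only [blockSeq, h]
  rw [if_neg (by omega), if_pos (by omega)]
  congr 1
  omega

theorem blockSeq_left (N : ℕ) (b c : ℕ → ℕ) {k j : ℕ} (hj : j < k) :
    blockSeq N b c (k * k + (k - 1 - j)) = c j := by
  have h : Nat.sqrt (k * k + (k - 1 - j)) = k := Nat.sqrt_add_eq k (by omega)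
  simp only [blockSeq, h]
  rw [if_neg (by omega), if_neg (by omega)]
  congr 1
  omega

theorem blockSeq_mem {N : ℕ} {b c : ℕ → ℕ} (hb : ∀ n, b n ∈ Set.Icc 1 4)
    (hc : ∀ n, c n ∈ Set.Icc 1 4) (i : ℕ) :
    i = i.sqrt * i.sqrt + i.sqrt ∨ blockSeq N b c i ∈ Set.Icc 1 4 := by
  by_cases h : i = i.sqrt * i.sqrt + i.sqrt
  · exact Or.inl h
  · right
    simp only [blockSeq, if_neg h]
    split_ifs
    exacts [hb _, hc _]

open Filter in
theorem exists_lagrangeVal_eq {N : ℕ} (hN : 1 ≤ N) {x y : ℝ} (hx : x ∈ hallSet)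
    (hy : y ∈ hallSet) (ht : 6 ≤ N + x + y) :
    ∃ α, Irrational α ∧ lagrangeVal α = ENNReal.ofReal (N + x + y) := by
  obtain ⟨⟨b, U⟩, hb, rfl⟩ := hx
  obtain ⟨⟨c, V⟩, hc, rfl⟩ := hy
  set t : ℝ := N + U 0 + V 0
  set a := blockSeq N b c with ha_def
  have hmem := blockSeq_mem (N := N) (fun n => (hb n).1) fun n => (hc n).1
  have ha : ∀ n, 1 ≤ a n := by
    intro n
    rcases hmem n with h | h
    · rw [h, ha_def, blockSeq_center]
      exact hN
    · exact h.1
  obtain ⟨X, hX⟩ := exists_isTails ha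
  have hXmem : ∀ n, X n ∈ Set.Icc (0 : ℝ) 1 := fun n => ⟨hX.nonneg n, hX.le_one n⟩
  have hcenter : ∀ k, 1 ≤ k → |convergentVal a X (k * k + k) - t| ≤ 4 * (1 / 2) ^ k := by
    intro k hk
    have hR : |X (k * k + k + 1) - U 0| ≤ 2 * (1 / 2) ^ k := by
      refine abs_tails_sub_le (d := b) (fun n => (hb n).1.1) k 0
        (u := fun j => X (k * k + k + 1 + j)) (v := U) (fun j => hXmem _) (fun j => (hb j).2.1)
        (fun j hj => ?_) (fun j hj => ?_)
      · have := hX.mul_eq (k * k + k + 1 + j)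
        rw [ha_def, blockSeq_right N b c hj] at this
        simpa [add_assoc] using this
      · simpa using (hb j).2.2
    have hL : |backTail a (k * k + (k - 1)) - V 0| ≤ 2 * (1 / 2) ^ k := by
      refine abs_tails_sub_le (d := c) (fun n => (hc n).1.1) k 0
        (u := fun j => backTail a (k * k + (k - 1) - j)) (v := V)
        (fun j => backTail_mem_Icc ha _) (fun j => (hc j).2.1) (fun j hj => ?_) (fun j hj => ?_)
      · have hkk : 1 ≤ k * k := Nat.mul_pos hk hk
        have := backTail_succ_mul ha (k * k + (k - 1) - (j + 1))
        rw [show k * k + (k - 1) - (j + 1) + 1 = k * k + (k - 1 - j) by omega, ha_def,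
          blockSeq_left N b c hj] at this
        rw [zero_add]
        convert this using 3
        omega
      · simpa using (hc j).2.2
    have hval := convergentVal_succ (X := X) ha (k * k + (k - 1))
    rw [show k * k + (k - 1) + 1 = k * k + k by omega,
      show k * k + (k - 1) + 2 = k * k + k + 1 by omega, ha_def, blockSeq_center] at hval
    rw [ha_def, hval, ← ha_def, abs_le]
    rw [abs_le] at hR hL
    simp only [t]
    constructor <;> linarith [hR.1, hR.2, hL.1, hL.2]
  have hsmall : ∀ ε > 0, ∀ᶠ k : ℕ in atTop, 1 ≤ k ∧ 4 * (1 / 2 : ℝ) ^ k ≤ ε := by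
    intro ε hε
    have hlim : Tendsto (fun k : ℕ => 4 * (1 / 2 : ℝ) ^ k) atTop (nhds 0) := by
      simpa using (tendsto_pow_atTop_nhds_zero_of_lt_one (r := (1 / 2 : ℝ)) (by norm_num)
        (by norm_num)).const_mul 4
    exact (eventually_ge_atTop 1).and (hlim.eventually_le_const hε)
  refine ⟨X 0, hX.irrational, hX.lagrangeVal_eq (fun ε hε => ?_) fun ε hε => ?_⟩
  · obtain ⟨K, hK⟩ := eventually_atTop.1 (hsmall ε hε)
    filter_upwards [eventually_ge_atTop (K * K + 1)] with i hi
    obtain ⟨i, rfl⟩ : ∃ j, i = j + 1 := ⟨i - 1, by omega⟩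
    rcases hmem (i + 1) with h | h
    · obtain ⟨h1, h2⟩ := hK _ (Nat.le_sqrt.2 (show K * K ≤ i + 1 by omega))
      have := hcenter _ h1
      rw [← h, abs_le] at this
      linarith [this.2]
    · have h4 : (a (i + 1) : ℝ) ≤ 4 := by exact_mod_cast h.2
      have := convergentVal_succ (X := X) ha i
      linarith [(backTail_mem_Icc ha i).2, hX.le_one (i + 2)]
  · rw [frequently_atTop]
    intro M
    obtain ⟨k, ⟨h1, h2⟩, hk⟩ := ((hsmall ε hε).and (eventually_ge_atTop M)).exists
    refine ⟨k * k + k, by nlinarith, ?_⟩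
    have := hcenter k h1
    rw [abs_le] at this
    linarith [this.1]

/-- **Hall's ray**: every real `t ≥ 6` belongs to the Lagrange spectrum, i.e. there is an
irrational `α` with `ℓ(α) = t`; thus `[6, ∞) ⊆ L`. -/
theorem hall_ray : Set.Ici (6 : ℝ) ⊆ LagrangeSpectrum := by
  intro t ht
  have ht : 6 ≤ t := ht
  have h1 := Nat.floor_le (show 0 ≤ t - 1 / 2 by linarith)
  have h2 := Nat.lt_floor_add_one (t - 1 / 2)
  have hA := hallMin_mem_Icc.2
  have hB := hallMax_mem_Icc.1
  have hN : 1 ≤ ⌊t - 1 / 2⌋₊ := Nat.le_floor (by norm_num; linarith)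
  obtain ⟨x, hx, y, hy, hxy⟩ := exists_add_eq_of_mem_Icc (s := t - ⌊t - 1 / 2⌋₊)
    ⟨by linarith, by linarith⟩
  have hsum : ⌊t - 1 / 2⌋₊ + x + y = t := by linarith
  obtain ⟨α, hα, hval⟩ := exists_lagrangeVal_eq hN hx hy (by rw [hsum]; exact ht)
  rw [hsum] at hval
  exact ⟨α, hα, by simp [hval], by rw [hval, ENNReal.toReal_ofReal (by linarith)]⟩
end
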